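/- Let b ≥ 2 be an integer and λ ∈ (1/b, 1), and assume that h_b(μ) < 0 for all μ ∈ [λ, 1). Then the graph {(x, W_{λ,b}(x)) : x ∈ [0,1)} of the classical Weierstrass function W_{λ,b} has Hausdorff dimension 2 + log λ / log b. -/

import Mathlib

open MeasureTheory Real Set Filter

noncomputable section

/-- The classical Weierstrass function `W_{λ,b}(x) = Σ_{n≥0} λ^n cos(2π b^n x)`. -/
def Wc (b : ℕ) (l : ℝ) (x : ℝ) : ℝ := ∑' n : ℕ, l ^ n * Real.cos (2 * π * (b : ℝ) ^ n * x)

/-- The function `h_b` of Barański–Bárány–Romanowska whose unique zero on `(1/b, 1)` is `λ_b`. -/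
def hBBR (b : ℕ) (l : ℝ) : ℝ :=
  if b = 2 then
    1 / (4 * l ^ 2 * (2 * l - 1) ^ 2) + 1 / (16 * l ^ 2 * (4 * l - 1) ^ 2)
      - 5 / (64 * l ^ 2) + Real.sqrt 2 / (2 * l) - 1
  else
    1 / ((b : ℝ) * l - 1) ^ 2 + 1 / ((b : ℝ) ^ 2 * l - 1) ^ 2 - Real.sin (π / b) ^ 2

/-! ### Basic properties of the Weierstrass function -/

theorem summable_Wc (b : ℕ) {l : ℝ} (h0 : 0 < l) (h1 : l < 1) (x : ℝ) :
    Summable fun n : ℕ => l ^ n * Real.cos (2 * π * (b : ℝ) ^ n * x) := by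
  refine Summable.of_norm_bounded (summable_geometric_of_lt_one h0.le h1) fun n => ?_
  rw [norm_mul, norm_pow, Real.norm_of_nonneg h0.le]
  exact mul_le_of_le_one_right (by positivity) (Real.abs_cos_le_one _)

theorem continuous_Wc (b : ℕ) {l : ℝ} (h0 : 0 < l) (h1 : l < 1) : Continuous (Wc b l) := by
  refine continuous_tsum (fun n => by fun_prop) (summable_geometric_of_lt_one h0.le h1) fun n x => ?_
  rw [norm_mul, norm_pow, Real.norm_of_nonneg h0.le]
  exact mul_le_of_le_one_right (by positivity) (Real.abs_cos_le_one _)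

theorem abs_Wc_le (b : ℕ) {l : ℝ} (h0 : 0 < l) (h1 : l < 1) (x : ℝ) :
    |Wc b l x| ≤ (1 - l)⁻¹ := by
  rw [← Real.norm_eq_abs]
  refine tsum_of_norm_bounded (hasSum_geometric_of_lt_one h0.le h1) fun n => ?_
  rw [norm_mul, norm_pow, Real.norm_of_nonneg h0.le]
  exact mul_le_of_le_one_right (by positivity) (Real.abs_cos_le_one _)

theorem Wc_eq_sum_add (b : ℕ) {l : ℝ} (h0 : 0 < l) (h1 : l < 1) (n : ℕ) (x : ℝ) :
    Wc b l x = ∑ k ∈ Finset.range n, l ^ k * Real.cos (2 * π * (b : ℝ) ^ k * x)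
      + l ^ n * Wc b l ((b : ℝ) ^ n * x) := by
  rw [Wc, ← (summable_Wc b h0 h1 x).sum_add_tsum_nat_add n, Wc, ← tsum_mul_left]
  congr 2
  ext k
  rw [pow_add, show 2 * π * (b : ℝ) ^ (k + n) * x = 2 * π * (b : ℝ) ^ k * ((b : ℝ) ^ n * x) by ring]
  ring

theorem Wc_add_natCast (b : ℕ) (l : ℝ) (p : ℕ) (x : ℝ) : Wc b l (p + x) = Wc b l x := by
  unfold Wc
  congr 1
  ext n
  rw [show 2 * π * (b : ℝ) ^ n * (p + x)
    = 2 * π * (b : ℝ) ^ n * x + ((b ^ n * p : ℕ) : ℝ) * (2 * π) by push_cast; ring,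
    Real.cos_add_nat_mul_two_pi]

/-! ### The strong stable curves -/

/-- The smooth part of the Weierstrass function on the `p`-th interval of level `n`, rescaled. -/
def smoothPart (b : ℕ) (c : ℝ) (n p : ℕ) (u : ℝ) : ℝ :=
  ∑ j ∈ Finset.range n, ((b : ℝ) * c) ^ (j + 1) * Real.cos (2 * π * ((p + u) / (b : ℝ) ^ (j + 1)))

/-- The derivative of `smoothPart`. -/
def strongSlope (b : ℕ) (c : ℝ) (n p : ℕ) (u : ℝ) : ℝ :=
  ∑ j ∈ Finset.range n, -(2 * π * c ^ (j + 1)) * Real.sin (2 * π * ((p + u) / (b : ℝ) ^ (j + 1)))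

/-- The second derivative of `smoothPart`. -/
def curvature (b : ℕ) (c : ℝ) (n p : ℕ) (u : ℝ) : ℝ :=
  ∑ j ∈ Finset.range n,
    -((2 * π) ^ 2 * (c / b) ^ (j + 1)) * Real.cos (2 * π * ((p + u) / (b : ℝ) ^ (j + 1)))

theorem Wc_eq_smoothPart (b : ℕ) (hb : 2 ≤ b) {c : ℝ} (hc : 1 < b * c) (n p : ℕ) (u : ℝ) :
    Wc b (b * c)⁻¹ ((p + u) / (b : ℝ) ^ n)
      = (b * c)⁻¹ ^ n * (smoothPart b c n p u + Wc b (b * c)⁻¹ u) := by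
  have hb0 : (b : ℝ) ≠ 0 := by positivity
  have hc0 : (b * c : ℝ) ≠ 0 := by positivity
  rw [Wc_eq_sum_add b (by positivity) (inv_lt_one_of_one_lt₀ hc) n, mul_add,
    mul_div_cancel₀ _ (pow_ne_zero _ hb0), Wc_add_natCast, smoothPart, Finset.mul_sum]
  congr 1
  rw [← Finset.sum_range_reflect]
  refine Finset.sum_congr rfl fun j hj => ?_
  have hj := Finset.mem_range.1 hj
  obtain ⟨m, rfl⟩ : ∃ m, n = j + 1 + m := ⟨n - (j + 1), by omega⟩
  rw [show j + 1 + m - 1 - j = m by omega]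
  have e1 : (b * c : ℝ)⁻¹ ^ (j + 1 + m) * (b * c) ^ (j + 1) = (b * c)⁻¹ ^ m := by
    rw [pow_add, mul_right_comm, ← mul_pow, inv_mul_cancel₀ hc0, one_pow, one_mul]
  rw [← mul_assoc, e1]
  congr 2
  rw [pow_add]
  field_simp

theorem abs_cos_taylor (x y : ℝ) : |cos y - cos x - -sin x * (y - x)| ≤ (y - x) ^ 2 := by
  have := (convex_uIcc x y).norm_image_sub_le_of_norm_hasDerivWithin_le (f := fun t => cos t + sin x * t)
    (f' := fun t => -sin t + sin x) (C := |y - x|) (x := x) (y := y)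
    (fun t _ => by
      have := ((hasDerivAt_cos t).fun_add ((hasDerivAt_id t).const_mul (sin x))).hasDerivWithinAt
        (s := uIcc x y)
      simpa using this) (fun t ht => by
        have h1 : |sin x - sin t| ≤ |x - t| := by
          simpa [Real.dist_eq] using Real.lipschitzWith_sin.dist_le_mul x t
        rw [Real.norm_eq_abs, show -sin t + sin x = sin x - sin t by ring]
        refine h1.trans ?_
        rw [abs_sub_comm]
        exact abs_sub_left_of_mem_uIcc ht) left_mem_uIcc right_mem_uIcc
  simp only [Real.norm_eq_abs, abs_mul_abs_self] at this
  calc _ = |cos y + sin x * y - (cos x + sin x * x)| := by ring_nf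
    _ ≤ _ := by rw [sq]; exact this

theorem abs_sin_taylor (x y : ℝ) : |sin y - sin x - cos x * (y - x)| ≤ (y - x) ^ 2 := by
  have := abs_cos_taylor (x - π / 2) (y - π / 2)
  rw [cos_sub_pi_div_two, cos_sub_pi_div_two, sin_sub_pi_div_two] at this
  simpa using this

theorem sum_pow_succ_le {x : ℝ} (h0 : 0 ≤ x) (h1 : x < 1) (n : ℕ) :
    ∑ j ∈ Finset.range n, x ^ (j + 1) ≤ x / (1 - x) := by
  have := (summable_geometric_of_lt_one h0 h1).sum_le_tsum (Finset.range n) fun i _ => by positivity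
  rw [tsum_geometric_of_lt_one h0 h1] at this
  simp_rw [pow_succ', ← Finset.mul_sum, div_eq_mul_inv]
  gcongr

theorem sum_pow_succ_le_one {x : ℝ} (h0 : 0 ≤ x) (h1 : x ≤ 1 / 2) (n : ℕ) :
    ∑ j ∈ Finset.range n, x ^ (j + 1) ≤ 1 := by
  refine (sum_pow_succ_le h0 (by linarith) n).trans ?_
  rw [div_le_one (by linarith)]
  linarith

theorem abs_smoothPart_taylor (b : ℕ) (hb : 2 ≤ b) {c : ℝ} (h0 : 0 < c) (h1 : c < 1) (n p : ℕ)
    (u v : ℝ) :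
    |smoothPart b c n p v - smoothPart b c n p u - strongSlope b c n p u * (v - u)|
      ≤ (2 * π) ^ 2 * (v - u) ^ 2 := by
  have hb' : (2 : ℝ) ≤ b := by exact_mod_cast hb
  have hcb : c / b ≤ 1 / 2 := by rw [div_le_iff₀ (by positivity)]; linarith
  simp only [smoothPart, strongSlope]
  rw [← Finset.sum_sub_distrib, Finset.sum_mul, ← Finset.sum_sub_distrib]
  refine (Finset.abs_sum_le_sum_abs _ _).trans ?_
  calc _ ≤ ∑ j ∈ Finset.range n, (c / b) ^ (j + 1) * ((2 * π) ^ 2 * (v - u) ^ 2) := by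
        refine Finset.sum_le_sum fun j _ => ?_
        have := abs_cos_taylor (2 * π * ((p + u) / (b : ℝ) ^ (j + 1)))
          (2 * π * ((p + v) / (b : ℝ) ^ (j + 1)))
        have h3 := mul_le_mul_of_nonneg_left this (show 0 ≤ ((b : ℝ) * c) ^ (j + 1) by positivity)
        rw [← abs_of_nonneg (show 0 ≤ ((b : ℝ) * c) ^ (j + 1) by positivity), ← abs_mul,
          abs_of_nonneg (show 0 ≤ ((b : ℝ) * c) ^ (j + 1) by positivity)] at h3
        have hbj : (b : ℝ) ^ (j + 1) ≠ 0 := by positivity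
        convert h3 using 1
        · congr 1
          simp only [mul_pow]
          field_simp
          ring
        · simp only [mul_pow, div_pow]
          field_simp
          ring
    _ ≤ _ := by
        rw [← Finset.sum_mul]
        exact mul_le_of_le_one_left (by positivity) (sum_pow_succ_le_one (by positivity) hcb n)

theorem abs_strongSlope_taylor (b : ℕ) (hb : 2 ≤ b) {c : ℝ} (h0 : 0 < c) (h1 : c < 1) (n p : ℕ)
    (u v : ℝ) :
    |strongSlope b c n p v - strongSlope b c n p u - curvature b c n p u * (v - u)|
      ≤ (2 * π) ^ 3 * (v - u) ^ 2 := by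
  have hb' : (2 : ℝ) ≤ b := by exact_mod_cast hb
  have hcb : c / b ^ 2 ≤ 1 / 2 := by rw [div_le_iff₀ (by positivity)]; nlinarith
  simp only [curvature, strongSlope]
  rw [← Finset.sum_sub_distrib, Finset.sum_mul, ← Finset.sum_sub_distrib]
  refine (Finset.abs_sum_le_sum_abs _ _).trans ?_
  calc _ ≤ ∑ j ∈ Finset.range n, (c / b ^ 2) ^ (j + 1) * ((2 * π) ^ 3 * (v - u) ^ 2) := by
        refine Finset.sum_le_sum fun j _ => ?_
        have := abs_sin_taylor (2 * π * ((p + u) / (b : ℝ) ^ (j + 1)))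
          (2 * π * ((p + v) / (b : ℝ) ^ (j + 1)))
        have h3 := mul_le_mul_of_nonneg_left this (show 0 ≤ 2 * π * c ^ (j + 1) by positivity)
        rw [← abs_of_nonneg (show 0 ≤ 2 * π * c ^ (j + 1) by positivity), ← abs_neg, ← abs_mul,
          abs_neg, abs_of_nonneg (show 0 ≤ 2 * π * c ^ (j + 1) by positivity)] at h3
        have hbj : (b : ℝ) ^ (j + 1) ≠ 0 := by positivity
        convert h3 using 1
        · congr 1
          simp only [mul_pow, div_pow]
          field_simp
          ring
        · simp only [div_pow, ← pow_mul, mul_comm 2 (j + 1)]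
          simp only [pow_mul]
          field_simp
          ring
    _ ≤ _ := by
        rw [← Finset.sum_mul]
        exact mul_le_of_le_one_left (by positivity) (sum_pow_succ_le_one (by positivity) hcb n)

theorem abs_strongSlope_le (b : ℕ) {c : ℝ} (h0 : 0 < c) (h1 : c < 1) (n p : ℕ) (u : ℝ) :
    |strongSlope b c n p u| ≤ 2 * π * (c / (1 - c)) := by
  refine (Finset.abs_sum_le_sum_abs _ _).trans ?_
  refine le_trans ?_ (mul_le_mul_of_nonneg_left (sum_pow_succ_le h0.le h1 n)
    (by positivity : 0 ≤ 2 * π))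
  rw [Finset.mul_sum]
  refine Finset.sum_le_sum fun j _ => ?_
  rw [abs_mul, abs_neg, abs_of_pos (by positivity)]
  exact mul_le_of_le_one_right (by positivity) (Real.abs_sin_le_one _)

theorem continuous_strongSlope (b : ℕ) (c : ℝ) (n p : ℕ) : Continuous (strongSlope b c n p) := by
  unfold strongSlope
  fun_prop

/-! ### Transversality -/

theorem sin_sq_pi_div_le {b : ℕ} (hb : 2 ≤ b) {p q : ℕ} (h : p % b ≠ q % b) :
    sin (π / b) ^ 2 ≤ sin (π * (p - q) / b) ^ 2 := by
  have hb0 : (0 : ℝ) < b := by positivity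
  set k : ℤ := (p : ℤ) - q with hk
  have hr0 : 0 ≤ k % b := Int.emod_nonneg _ (by positivity)
  have hr1 : k % b < b := Int.emod_lt_of_pos _ (by positivity)
  have hr2 : k % b ≠ 0 := fun h0 => h (by
    have : (q : ℤ) ≡ p [ZMOD b] := (Int.modEq_iff_dvd).2 (Int.dvd_of_emod_eq_zero h0)
    exact ((Int.natCast_modEq_iff).1 this).symm)
  have e : π * ((p : ℝ) - q) / b = π * (k % b : ℤ) / b + (k / b : ℤ) * π := by
    have : (k : ℝ) = (k % b : ℤ) + b * (k / b : ℤ) := by exact_mod_cast (Int.emod_add_mul_ediv k b).symm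
    rw [show (p : ℝ) - q = (k : ℝ) by simp [hk], this]
    field_simp
  have e2 : sin (π * ((p : ℝ) - q) / b) ^ 2 = sin (π * (k % b : ℤ) / b) ^ 2 := by
    have : ((-1 : ℝ) ^ (k / b)) ^ 2 = 1 := by
      rcases Int.even_or_odd (k / b) with h | h
      · simp [h.neg_one_zpow]
      · simp [h.neg_one_zpow]
    rw [e, Real.sin_add_int_mul_pi, mul_pow, this, one_mul]
  rw [e2]
  have h1r : (1 : ℝ) ≤ (k % b : ℤ) := by exact_mod_cast (show 1 ≤ k % b by omega)
  have hrb : ((k % b : ℤ) : ℝ) ≤ b - 1 := by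
    have : ((k % b : ℤ) : ℝ) + 1 ≤ b := by exact_mod_cast (show k % b + 1 ≤ b by omega)
    linarith
  have hle : π / b ≤ π * (k % b : ℤ) / b := by
    gcongr
    nlinarith [pi_pos]
  have hle2 : π * (k % b : ℤ) / b ≤ π - π / b := by
    rw [show π - π / b = π * (b - 1) / b by field_simp]
    gcongr
  have hpb : 0 < π / b := by positivity
  have hs0 : 0 ≤ sin (π / b) := sin_nonneg_of_nonneg_of_le_pi hpb.le (by linarith)
  refine pow_le_pow_left₀ hs0 ?_ 2
  rcases le_total (π * (k % b : ℤ) / b) (π / 2) with h' | h'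
  · exact sin_le_sin_of_le_of_le_pi_div_two (by linarith) h' hle
  · rw [← sin_pi_sub (π * (k % b : ℤ) / b)]
    exact sin_le_sin_of_le_of_le_pi_div_two (by linarith) (by linarith) (by linarith)

theorem exists_margin {T₁ T₂ m : ℝ} (h : T₁ ^ 2 + T₂ ^ 2 < m) :
    ∃ ε > 0, (T₁ + ε) ^ 2 + (T₂ + ε) ^ 2 < m := by
  have hc : Continuous fun ε : ℝ => (T₁ + ε) ^ 2 + (T₂ + ε) ^ 2 := by fun_prop
  have := (hc.tendsto 0).eventually (gt_mem_nhds (show (T₁ + 0) ^ 2 + (T₂ + 0) ^ 2 < m by simpa))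
  obtain ⟨ε, hε, h⟩ := ((this.filter_mono (nhdsWithin_le_nhds (s := Ioi 0))).and
    self_mem_nhdsWithin).exists
  exact ⟨ε, h, hε⟩

theorem le_abs_or_le_abs {A B t₁ t₂ T₁ T₂ ε : ℝ} (h₁ : |t₁| ≤ T₁) (h₂ : |t₂| ≤ T₂)
    (h : (T₁ + ε) ^ 2 + (T₂ + ε) ^ 2 < A ^ 2 + B ^ 2) : ε ≤ |A + t₁| ∨ ε ≤ |B + t₂| := by
  by_contra! hcon
  have hA : |A| ≤ T₁ + ε := by
    have := abs_sub (A + t₁) t₁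
    rw [add_sub_cancel_right] at this
    linarith [hcon.1]
  have hB : |B| ≤ T₂ + ε := by
    have := abs_sub (B + t₂) t₂
    rw [add_sub_cancel_right] at this
    linarith [hcon.2]
  have h3 : A ^ 2 ≤ (T₁ + ε) ^ 2 := sq_le_sq' (by linarith [neg_abs_le A]) (by linarith [le_abs_self A])
  have h4 : B ^ 2 ≤ (T₂ + ε) ^ 2 := sq_le_sq' (by linarith [neg_abs_le B]) (by linarith [le_abs_self B])
  linarith

theorem abs_sum_pow_mul_sub_le {x : ℝ} (h0 : 0 ≤ x) (h1 : x < 1) (n : ℕ) (f g : ℕ → ℝ)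
    (hf : ∀ j, |f j| ≤ 1) (hg : ∀ j, |g j| ≤ 1) :
    |∑ j ∈ Finset.range n, x ^ (j + 1) * (f j - g j)| ≤ 2 * (x / (1 - x)) := by
  refine (Finset.abs_sum_le_sum_abs _ _).trans ?_
  refine le_trans ?_ (mul_le_mul_of_nonneg_left (sum_pow_succ_le h0 h1 n) zero_le_two)
  rw [Finset.mul_sum]
  refine Finset.sum_le_sum fun j _ => ?_
  rw [abs_mul, abs_of_nonneg (by positivity), mul_comm]
  gcongr
  have := abs_sub (f j) (g j)
  linarith [hf j, hg j]

theorem trig_square_lower_bound {s k c : ℝ} (h : s ^ 2 + k ^ 2 = 1) (h0 : 0 ≤ c) (h1 : c ≤ 1) :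
    1 - √2 * c + 5 * c ^ 2 / 16
      ≤ (2 * s * k + c / 2 * (s - k)) ^ 2 + (k ^ 2 - s ^ 2 + c / 4 * (k + s)) ^ 2 := by
  set w := s - k with hw
  have hr0 : 0 ≤ √2 := Real.sqrt_nonneg 2
  have hr : √2 ^ 2 = 2 := Real.sq_sqrt zero_le_two
  have hr1 : 1.4 ≤ √2 := Real.le_sqrt_of_sq_le (by norm_num)
  have hw2 : w ^ 2 ≤ 2 := by nlinarith [sq_nonneg (s + k)]
  have hwr : w ≤ √2 := by nlinarith
  have hsk : 2 * s * k = 1 - w ^ 2 := by rw [hw]; linear_combination h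
  have e : (2 * s * k + c / 2 * w) ^ 2 + (k ^ 2 - s ^ 2 + c / 4 * (k + s)) ^ 2
      = 1 + c * (-w ^ 3 / 2 - 3 * c / 16 * (1 - w ^ 2)) + 5 * c ^ 2 / 16 := by
    have hz : (k + s) ^ 2 = 2 - w ^ 2 := by rw [hw]; linear_combination 2 * h
    have : k ^ 2 - s ^ 2 + c / 4 * (k + s) = (k + s) * (c / 4 - w) := by rw [hw]; ring
    rw [this, mul_pow, hz, hsk]
    ring
  rw [e]
  have hF : -√2 ≤ -w ^ 3 / 2 - 3 * c / 16 * (1 - w ^ 2) := by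
    by_cases hw1 : 1 ≤ w ^ 2
    · have : w ^ 3 ≤ 2 * √2 := by
        have : 0 ≤ (√2 - w) * (2 + √2 * w + w ^ 2) := by
          refine mul_nonneg (by linarith) ?_
          nlinarith [sq_nonneg (√2 + 2 * w)]
        nlinarith
      nlinarith
    · have hw1 : w ^ 2 < 1 := not_le.1 hw1
      have : w < 1 := by nlinarith
      have h3 : w ^ 3 ≤ 1 := by nlinarith [sq_nonneg w]
      have h4 : c * (1 - w ^ 2) ≤ 1 := by nlinarith [sq_nonneg w]
      nlinarith
  nlinarith

theorem transversality_of_three_le {b : ℕ} (hb : 3 ≤ b) {c : ℝ} (h0 : 0 < c) (h1 : c < 1)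
    (hneg : hBBR b (b * c)⁻¹ < 0) :
    ∃ ε > 0, ∀ n p q : ℕ, p % b ≠ q % b → ∀ u : ℝ,
      ε ≤ |strongSlope b c (n + 1) p u - strongSlope b c (n + 1) q u|
        ∨ ε ≤ |curvature b c (n + 1) p u - curvature b c (n + 1) q u| := by
  have hb' : (3 : ℝ) ≤ b := by exact_mod_cast hb
  have hb0 : (0 : ℝ) < b := by linarith
  set e : ℝ := c / b with he
  have he0 : 0 < e := by positivity
  have he1 : e < 1 := by rw [he, div_lt_one hb0]; linarith
  have hT : (2 * (c / (1 - c))) ^ 2 + (2 * (e / (1 - e))) ^ 2 < 4 * sin (π / b) ^ 2 := by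
    rw [hBBR, if_neg (by omega)] at hneg
    have e1 : 1 / ((b : ℝ) * (b * c)⁻¹ - 1) ^ 2 = (c / (1 - c)) ^ 2 := by
      rw [show (b : ℝ) * (b * c)⁻¹ - 1 = (1 - c) / c by field_simp]
      rw [div_pow, one_div_div, div_pow]
    have e2 : 1 / ((b : ℝ) ^ 2 * (b * c)⁻¹ - 1) ^ 2 = (e / (1 - e)) ^ 2 := by
      have : (b : ℝ) ^ 2 * (b * c)⁻¹ - 1 = (1 - e) / e := by
        rw [he]; field_simp
      rw [this, ← one_div_pow, one_div_div]
    rw [e1, e2] at hneg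
    nlinarith
  obtain ⟨ε, hε, hm⟩ := exists_margin hT
  refine ⟨min (2 * π * c * ε) ((2 * π) ^ 2 * e * ε), by positivity, fun n p q hpq u => ?_⟩
  set X : ℕ → ℝ := fun j => 2 * π * ((p + u) / (b : ℝ) ^ (j + 1)) with hX
  set Y : ℕ → ℝ := fun j => 2 * π * ((q + u) / (b : ℝ) ^ (j + 1)) with hY
  have t1 := abs_sum_pow_mul_sub_le h0.le h1 n (fun j => sin (X (j + 1))) (fun j => sin (Y (j + 1)))
    (fun j => abs_sin_le_one _) (fun j => abs_sin_le_one _)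
  have t2 := abs_sum_pow_mul_sub_le he0.le he1 n (fun j => cos (X (j + 1)))
    (fun j => cos (Y (j + 1))) (fun j => abs_cos_le_one _) (fun j => abs_cos_le_one _)
  have hmain : 4 * sin (π / b) ^ 2 ≤ (sin (X 0) - sin (Y 0)) ^ 2 + (cos (X 0) - cos (Y 0)) ^ 2 := by
    have h3 := sin_sq_pi_div_le (by omega : 2 ≤ b) hpq
    have h4 : (X 0 - Y 0) / 2 = π * (p - q) / b := by
      simp only [hX, hY]; field_simp; ring
    have h5 : (sin (X 0) - sin (Y 0)) ^ 2 + (cos (X 0) - cos (Y 0)) ^ 2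
        = 4 * sin ((X 0 - Y 0) / 2) ^ 2 := by
      rw [sin_sub_sin, cos_sub_cos]
      linear_combination 4 * sin ((X 0 - Y 0) / 2) ^ 2 * sin_sq_add_cos_sq ((X 0 + Y 0) / 2)
    rw [h5, h4]
    linarith
  have d1 : strongSlope b c (n + 1) p u - strongSlope b c (n + 1) q u = -(2 * π * c) *
      (sin (X 0) - sin (Y 0)
        + ∑ j ∈ Finset.range n, c ^ (j + 1) * (sin (X (j + 1)) - sin (Y (j + 1)))) := by
    rw [strongSlope, strongSlope, ← Finset.sum_sub_distrib, Finset.sum_range_succ', mul_add,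
      Finset.mul_sum, add_comm]
    congr 1
    · simp only [hX, hY]; ring
    · refine Finset.sum_congr rfl fun j _ => ?_
      simp only [hX, hY]; ring
  have d2 : curvature b c (n + 1) p u - curvature b c (n + 1) q u = -((2 * π) ^ 2 * e) *
      (cos (X 0) - cos (Y 0)
        + ∑ j ∈ Finset.range n, e ^ (j + 1) * (cos (X (j + 1)) - cos (Y (j + 1)))) := by
    rw [curvature, curvature, ← Finset.sum_sub_distrib, Finset.sum_range_succ', mul_add,
      Finset.mul_sum, add_comm]
    congr 1
    · simp only [hX, hY, he]; ring
    · refine Finset.sum_congr rfl fun j _ => ?_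
      simp only [hX, hY, he]; ring
  rw [d1, d2, abs_mul, abs_mul, abs_neg, abs_neg, abs_of_pos (by positivity : 0 < 2 * π * c),
    abs_of_pos (by positivity : 0 < (2 * π) ^ 2 * e)]
  rcases le_abs_or_le_abs t1 t2 (hm.trans_le hmain) with h | h
  · exact Or.inl ((min_le_left _ _).trans (by gcongr))
  · exact Or.inr ((min_le_right _ _).trans (by gcongr))

theorem trig_lower_bound_of_mod_two_ne {p q : ℕ} (h : p % 2 ≠ q % 2) {c : ℝ} (h0 : 0 ≤ c) (h1 : c ≤ 1)
    (u : ℝ) :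
    4 * (1 - √2 * c + 5 * c ^ 2 / 16)
      ≤ (sin (π * (p + u)) - sin (π * (q + u))
          + c * (sin (π * (p + u) / 2) - sin (π * (q + u) / 2))) ^ 2
        + (cos (π * (p + u)) - cos (π * (q + u))
          + c / 2 * (cos (π * (p + u) / 2) - cos (π * (q + u) / 2))) ^ 2 := by
  set α := π * (p + u) / 2 with hα
  set β := π * (q + u) / 2 with hβ
  rw [show π * (p + u) = 2 * α by rw [hα]; ring, show π * (q + u) = 2 * β by rw [hβ]; ring,
    sin_two_mul, sin_two_mul, cos_two_mul', cos_two_mul']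
  have key : (sin β = cos α ∧ cos β = -sin α) ∨ (sin β = -cos α ∧ cos β = sin α) := by
    obtain ⟨m, hm⟩ : ∃ m : ℤ, (q : ℤ) = p + 1 + 4 * m ∨ (q : ℤ) = p - 1 + 4 * m := by
      refine ⟨((q : ℤ) - p + 1) / 4, ?_⟩
      omega
    rcases hm with hm | hm
    · have hq : (q : ℝ) = p + 1 + 4 * m := by exact_mod_cast hm
      have : β = α + π / 2 + m * (2 * π) := by rw [hβ, hα, hq]; ring
      left
      rw [this, sin_add_int_mul_two_pi, cos_add_int_mul_two_pi, sin_add_pi_div_two,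
        cos_add_pi_div_two]
      exact ⟨rfl, rfl⟩
    · have hq : (q : ℝ) = p - 1 + 4 * m := by exact_mod_cast hm
      have : β = α - π / 2 + m * (2 * π) := by rw [hβ, hα, hq]; ring
      right
      rw [this, sin_add_int_mul_two_pi, cos_add_int_mul_two_pi, sin_sub_pi_div_two,
        cos_sub_pi_div_two]
      exact ⟨rfl, rfl⟩
  have hsc := sin_sq_add_cos_sq α
  rcases key with ⟨hs, hk⟩ | ⟨hs, hk⟩
  · have := trig_square_lower_bound hsc h0 h1
    rw [hs, hk]
    nlinarith
  · have := trig_square_lower_bound (s := -sin α) (k := cos α) (by rw [neg_sq]; exact hsc) h0 h1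
    rw [hs, hk]
    nlinarith

theorem transversality_two {c : ℝ} (h0 : 0 < c) (h1 : c < 1)
    (hneg : hBBR 2 ((2 : ℕ) * c)⁻¹ < 0) :
    ∃ ε > 0, ∀ n p q : ℕ, p % 2 ≠ q % 2 → ∀ u : ℝ,
      ε ≤ |strongSlope 2 c (n + 2) p u - strongSlope 2 c (n + 2) q u|
        ∨ ε ≤ |curvature 2 c (n + 2) p u - curvature 2 c (n + 2) q u| := by
  set e : ℝ := c / 2 with he
  have he0 : 0 < e := by positivity
  have he1 : e < 1 := by rw [he]; linarith
  have hT : (c * (2 * (c / (1 - c)))) ^ 2 + (e * (2 * (e / (1 - e)))) ^ 2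
      < 4 * (1 - √2 * c + 5 * c ^ 2 / 16) := by
    rw [hBBR, if_pos rfl] at hneg
    push_cast at hneg
    have hc1 : 1 - c ≠ 0 := by linarith
    have he1' : 1 - e ≠ 0 := by linarith
    have e1 : 1 / (4 * (2 * c)⁻¹ ^ 2 * (2 * (2 * c)⁻¹ - 1) ^ 2) = (c * (c / (1 - c))) ^ 2 := by
      rw [show 2 * (2 * c)⁻¹ - 1 = (1 - c) / c by field_simp]
      field_simp
      norm_num
    have e2 : 1 / (16 * (2 * c)⁻¹ ^ 2 * (4 * (2 * c)⁻¹ - 1) ^ 2) = (e * (e / (1 - e))) ^ 2 := by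
      rw [show 4 * (2 * c)⁻¹ - 1 = (1 - e) / e by rw [he]; field_simp; ring,
        show (2 * c)⁻¹ = (4 * e)⁻¹ by rw [he]; ring]
      field_simp
      norm_num
    have e3 : 5 / (64 * (2 * c)⁻¹ ^ 2) = 5 * c ^ 2 / 16 := by field_simp; norm_num
    have e4 : √2 / (2 * (2 * c)⁻¹) = √2 * c := by field_simp
    rw [e1, e2, e3, e4] at hneg
    nlinarith
  obtain ⟨ε, hε, hm⟩ := exists_margin hT
  refine ⟨min (2 * π * c * ε) ((2 * π) ^ 2 * e * ε), by positivity, fun n p q hpq u => ?_⟩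
  set X : ℕ → ℝ := fun j => 2 * π * ((p + u) / (2 : ℝ) ^ (j + 1)) with hX
  set Y : ℕ → ℝ := fun j => 2 * π * ((q + u) / (2 : ℝ) ^ (j + 1)) with hY
  have t1 := abs_sum_pow_mul_sub_le h0.le h1 n (fun j => sin (X (j + 2))) (fun j => sin (Y (j + 2)))
    (fun j => abs_sin_le_one _) (fun j => abs_sin_le_one _)
  have t2 := abs_sum_pow_mul_sub_le he0.le he1 n (fun j => cos (X (j + 2)))
    (fun j => cos (Y (j + 2))) (fun j => abs_cos_le_one _) (fun j => abs_cos_le_one _)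
  replace t1 := mul_le_mul_of_nonneg_left t1 h0.le
  replace t2 := mul_le_mul_of_nonneg_left t2 he0.le
  rw [← abs_of_pos h0, ← abs_mul, abs_of_pos h0] at t1
  rw [← abs_of_pos he0, ← abs_mul, abs_of_pos he0] at t2
  have hmain := trig_lower_bound_of_mod_two_ne hpq h0.le h1.le u
  have x0 : π * (p + u) = X 0 := by simp only [hX]; ring
  have y0 : π * (q + u) = Y 0 := by simp only [hY]; ring
  have x1 : X 0 / 2 = X 1 := by simp only [hX]; ring
  have y1 : Y 0 / 2 = Y 1 := by simp only [hY]; ring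
  rw [x0, y0, x1, y1] at hmain
  have d1 : strongSlope 2 c (n + 2) p u - strongSlope 2 c (n + 2) q u = -(2 * π * c) *
      (sin (X 0) - sin (Y 0) + c * (sin (X 1) - sin (Y 1))
        + c * ∑ j ∈ Finset.range n, c ^ (j + 1) * (sin (X (j + 2)) - sin (Y (j + 2)))) := by
    rw [strongSlope, strongSlope, ← Finset.sum_sub_distrib, Finset.sum_range_succ',
      Finset.sum_range_succ', mul_add, Finset.mul_sum, Finset.mul_sum, add_assoc, add_comm]
    congr 1
    · simp only [hX, hY]; push_cast; ring
    · refine Finset.sum_congr rfl fun j _ => ?_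
      simp only [hX, hY]; push_cast; ring
  have d2 : curvature 2 c (n + 2) p u - curvature 2 c (n + 2) q u = -((2 * π) ^ 2 * e) *
      (cos (X 0) - cos (Y 0) + c / 2 * (cos (X 1) - cos (Y 1))
        + e * ∑ j ∈ Finset.range n, e ^ (j + 1) * (cos (X (j + 2)) - cos (Y (j + 2)))) := by
    rw [curvature, curvature, ← Finset.sum_sub_distrib, Finset.sum_range_succ',
      Finset.sum_range_succ', mul_add, Finset.mul_sum, Finset.mul_sum, add_assoc, add_comm]
    congr 1
    · simp only [hX, hY, he]; push_cast; ring
    · refine Finset.sum_congr rfl fun j _ => ?_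
      simp only [hX, hY, he]; push_cast; ring
  rw [d1, d2, abs_mul, abs_mul, abs_neg, abs_neg, abs_of_pos (by positivity : 0 < 2 * π * c),
    abs_of_pos (by positivity : 0 < (2 * π) ^ 2 * e)]
  rcases le_abs_or_le_abs t1 t2 (hm.trans_le hmain) with h | h
  · exact Or.inl ((min_le_left _ _).trans (by gcongr))
  · exact Or.inr ((min_le_right _ _).trans (by gcongr))

theorem transversality {b : ℕ} (hb : 2 ≤ b) {c : ℝ} (h0 : 0 < c) (h1 : c < 1)
    (hneg : hBBR b (b * c)⁻¹ < 0) :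
    ∃ ε > 0, ∀ n p q : ℕ, p % b ≠ q % b → ∀ u : ℝ,
      ε ≤ |strongSlope b c (n + 2) p u - strongSlope b c (n + 2) q u|
        ∨ ε ≤ |curvature b c (n + 2) p u - curvature b c (n + 2) q u| := by
  rcases hb.eq_or_lt with rfl | hb
  · exact transversality_two h0 h1 hneg
  · obtain ⟨ε, hε, h⟩ := transversality_of_three_le hb h0 h1 hneg
    exact ⟨ε, hε, fun n => h (n + 1)⟩

/-- Sublevel sets of a function without approximate double zeros are small. -/
theorem volume_sublevel_le {ε K : ℝ} (hε : 0 < ε) (hK : 0 ≤ K) :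
    ∃ C > 0, ∀ f f' : ℝ → ℝ, (∀ u v, |f v - f u - f' u * (v - u)| ≤ K * (v - u) ^ 2) →
      (∀ u, ε ≤ |f u| ∨ ε ≤ |f' u|) → ∀ δ > 0,
        volume.real {u ∈ Ico (0 : ℝ) 1 | |f u| ≤ δ} ≤ C * δ := by
  obtain ⟨M, hM⟩ := exists_nat_gt (2 * K / ε)
  have hM0 : (0 : ℝ) < M := lt_of_le_of_lt (by positivity) hM
  refine ⟨M * (4 / ε), by positivity, fun f f' hf hff δ hδ => ?_⟩
  have hMn : 1 ≤ M := by exact_mod_cast hM0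
  rcases le_or_gt ε δ with hεδ | hεδ
  · have h1 : volume.real {u ∈ Ico (0 : ℝ) 1 | |f u| ≤ δ} ≤ 1 := by
      refine (measureReal_mono (sep_subset _ _) (by simp)).trans ?_
      simp
    have h2 : (1 : ℝ) ≤ M := by exact_mod_cast hMn
    have h3 : 1 ≤ δ / ε := by rwa [one_le_div hε]
    calc _ ≤ 1 := h1
      _ ≤ M * (4 * (δ / ε)) := by nlinarith
      _ = _ := by ring
  · set A : ℕ → Set ℝ := fun i => {u | (i : ℝ) ≤ M * u ∧ M * u < i + 1 ∧ |f u| ≤ δ} with hA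
    have hsub : {u ∈ Ico (0 : ℝ) 1 | |f u| ≤ δ} ⊆ ⋃ i ∈ Finset.range M, A i := by
      rintro u ⟨⟨hu0, hu1⟩, hu⟩
      have hMu : 0 ≤ M * u := by positivity
      simp only [mem_iUnion, Finset.mem_range]
      refine ⟨⌊M * u⌋₊, ?_, Nat.floor_le hMu, Nat.lt_floor_add_one _, hu⟩
      rw [Nat.floor_lt hMu]
      nlinarith
    have hAi : ∀ i, volume (A i) ≤ ENNReal.ofReal (4 * δ / ε) := by
      intro i
      refine (Real.volume_le_diam _).trans (Metric.ediam_le fun x hx y hy => ?_)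
      rw [edist_dist]
      refine ENNReal.ofReal_le_ofReal ?_
      rw [dist_comm, Real.dist_eq]
      obtain ⟨hx1, hx2, hx3⟩ := hx
      obtain ⟨hy1, hy2, hy3⟩ := hy
      have hfx : ε ≤ |f' x| := (hff x).resolve_left (by linarith)
      have hd : M * |y - x| ≤ 1 := by
        rw [← abs_of_pos hM0, ← abs_mul, abs_le]
        constructor <;> nlinarith
      have h1 := hf x y
      have h2 : |f' x| * |y - x| ≤ 2 * δ + K * (y - x) ^ 2 := by
        rw [← abs_mul]
        have := abs_sub (f y - f x) (f y - f x - f' x * (y - x))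
        rw [sub_sub_cancel] at this
        have := abs_sub (f y) (f x)
        linarith
      rw [← sq_abs] at h2
      have h3 : 2 * K ≤ M * ε := by rw [div_lt_iff₀ hε] at hM; exact hM.le
      rw [le_div_iff₀ hε]
      have h0 := abs_nonneg (y - x)
      have h5 : 2 * (K * |y - x| ^ 2) ≤ ε * |y - x| := by
        have : 2 * K * |y - x| ≤ ε := by
          calc 2 * K * |y - x| ≤ M * ε * |y - x| := by gcongr
            _ = ε * (M * |y - x|) := by ring
            _ ≤ ε * 1 := by gcongr
            _ = ε := mul_one _
        nlinarith
      nlinarith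
    have : volume {u ∈ Ico (0 : ℝ) 1 | |f u| ≤ δ} ≤ ENNReal.ofReal (M * (4 / ε) * δ) := by
      refine (measure_mono hsub).trans ((measure_biUnion_finset_le _ _).trans ?_)
      refine (Finset.sum_le_sum fun i _ => hAi i).trans ?_
      rw [Finset.sum_const, Finset.card_range, nsmul_eq_mul, mul_assoc,
        ENNReal.ofReal_mul hM0.le, ENNReal.ofReal_natCast]
      gcongr
      exact le_of_eq (by ring)
    exact ENNReal.toReal_le_of_le_ofReal (by positivity) this

/-! ### Counting pairs of nearby slopes -/

theorem volumeReal_affine_preimage {m : ℝ} (hm : 0 < m) (p : ℝ) (T : Set ℝ) :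
    volume.real {u | (p + u) / m ∈ T} = m * volume.real T := by
  have : {u | (p + u) / m ∈ T} = (fun u => p + u) ⁻¹' ((fun x => m⁻¹ * x) ⁻¹' T) := by
    ext u
    simp [div_eq_inv_mul]
  rw [measureReal_def, this, measure_preimage_add, Real.volume_preimage_mul_left (by positivity),
    inv_inv, abs_of_pos hm, ENNReal.toReal_mul, ENNReal.toReal_ofReal hm.le, measureReal_def]

theorem sum_volumeReal_branches {m : ℕ} (hm : 0 < m) {S : Set ℝ} (hS : MeasurableSet S) :
    ∑ p ∈ Finset.range m, volume.real {u ∈ Ico (0 : ℝ) 1 | ((p : ℝ) + u) / m ∈ S}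
      = m * volume.real {x ∈ Ico (0 : ℝ) 1 | x ∈ S} := by
  have hm' : (0 : ℝ) < m := by exact_mod_cast hm
  set T : ℕ → Set ℝ := fun p => S ∩ (fun x => m * x) ⁻¹' Ico (p : ℝ) (p + 1) with hT
  have h1 : ∀ p : ℕ, {u ∈ Ico (0 : ℝ) 1 | ((p : ℝ) + u) / m ∈ S} = {u | ((p : ℝ) + u) / m ∈ T p} := by
    intro p
    ext u
    simp only [hT, mem_ofPred_eq, mem_inter_iff, mem_preimage, mem_Ico, mul_div_cancel₀ _ hm'.ne']
    constructor
    · rintro ⟨⟨h1, h2⟩, h3⟩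
      exact ⟨h3, by linarith, by linarith⟩
    · rintro ⟨h3, h1, h2⟩
      exact ⟨⟨by linarith, by linarith⟩, h3⟩
  simp_rw [h1, volumeReal_affine_preimage hm', ← Finset.mul_sum]
  congr 1
  have hTm : ∀ p ∈ Finset.range m, MeasurableSet (T p) := fun p _ =>
    hS.inter (measurableSet_Ico.preimage (by fun_prop))
  have hU : {x ∈ Ico (0 : ℝ) 1 | x ∈ S} = ⋃ p ∈ Finset.range m, T p := by
    ext x
    simp only [hT, mem_ofPred_eq, mem_inter_iff, mem_preimage, mem_Ico, mem_iUnion, Finset.mem_range, exists_prop]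
    constructor
    · rintro ⟨⟨h1, h2⟩, h3⟩
      have hx : 0 ≤ m * x := by positivity
      refine ⟨⌊m * x⌋₊, ?_, h3, Nat.floor_le hx, Nat.lt_floor_add_one _⟩
      rw [Nat.floor_lt hx]
      nlinarith
    · rintro ⟨p, hp, h3, h1, h2⟩
      have : (p : ℝ) + 1 ≤ m := by exact_mod_cast hp
      refine ⟨⟨?_, ?_⟩, h3⟩
      · by_contra! h
        nlinarith [(Nat.cast_nonneg p : (0 : ℝ) ≤ p)]
      · by_contra! h
        nlinarith
  rw [hU, measureReal_biUnion_finset (fun p _ q _ hpq => ?_) hTm (fun p hp => ?_)]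
  · rw [Function.onFun, Set.disjoint_left]
    rintro x ⟨-, h1, h2⟩ ⟨-, h3, h4⟩
    apply hpq
    have a : (p : ℝ) < q + 1 := by linarith
    have b : (q : ℝ) < p + 1 := by linarith
    have a' : p < q + 1 := by exact_mod_cast a
    have b' : q < p + 1 := by exact_mod_cast b
    omega
  · have : T p ⊆ {x ∈ Ico (0 : ℝ) 1 | x ∈ S} := by
      rw [hU]
      exact subset_biUnion_of_mem (u := T) hp
    exact measure_ne_top_of_subset (this.trans (sep_subset _ _)) (by simp)

theorem sum_range_mul_eq {b : ℕ} (m : ℕ) (F : ℕ → ℝ) :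
    ∑ p ∈ Finset.range (b * m), F p
      = ∑ p ∈ Finset.range m, ∑ i ∈ Finset.range b, F (i + b * p) := by
  induction m with
  | zero => simp
  | succ m ih =>
    rw [Nat.mul_succ, Finset.sum_range_add, ih, Finset.sum_range_succ]
    simp_rw [add_comm (b * m)]

theorem strongSlope_sub_of_same_digit {b : ℕ} (hb : 2 ≤ b) (c : ℝ) (n i p q : ℕ) (u : ℝ) :
    strongSlope b c (n + 1) (i + b * p) u - strongSlope b c (n + 1) (i + b * q) u
      = c * (strongSlope b c n p ((i + u) / b) - strongSlope b c n q ((i + u) / b)) := by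
  have hb0 : (b : ℝ) ≠ 0 := by positivity
  have h : ∀ p : ℕ, strongSlope b c (n + 1) (i + b * p) u
      = c * strongSlope b c n p ((i + u) / b) - 2 * π * c * sin (2 * π * ((i + u) / b)) := by
    intro p
    rw [strongSlope, strongSlope, Finset.sum_range_succ', Finset.mul_sum, sub_eq_add_neg]
    congr 1
    · refine Finset.sum_congr rfl fun j _ => ?_
      rw [show ((i + b * p : ℕ) + u) / (b : ℝ) ^ (j + 1 + 1) = (p + (i + u) / b) / (b : ℝ) ^ (j + 1) by
        push_cast; field_simp; ring]
      ring
    · rw [show 2 * π * (((i + b * p : ℕ) + u) / (b : ℝ) ^ (0 + 1))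
        = 2 * π * ((i + u) / b) + p * (2 * π) by push_cast; field_simp; ring,
        sin_add_nat_mul_two_pi]
      ring
  rw [h, h]
  ring

/-- The total measure of parameters at which two slopes of level `n` are `δ`-close. -/
def closePairs (b : ℕ) (c : ℝ) (n : ℕ) (δ : ℝ) : ℝ :=
  ∑ p ∈ Finset.range (b ^ n), ∑ q ∈ Finset.range (b ^ n),
    volume.real {u ∈ Ico (0 : ℝ) 1 | |strongSlope b c n p u - strongSlope b c n q u| ≤ δ}

theorem volumeReal_sep_Ico_le_one (P : ℝ → Prop) : volume.real {u ∈ Ico (0 : ℝ) 1 | P u} ≤ 1 :=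
  (measureReal_mono (sep_subset _ _) (by simp)).trans (by simp)

theorem closePairs_le_sq (b : ℕ) (c : ℝ) (n : ℕ) (δ : ℝ) :
    closePairs b c n δ ≤ ((b : ℝ) ^ n) ^ 2 := by
  refine (Finset.sum_le_sum fun p _ => Finset.sum_le_sum fun q _ =>
    volumeReal_sep_Ico_le_one _).trans (le_of_eq ?_)
  simp [sq]

theorem closePairs_succ_le {b : ℕ} (hb : 2 ≤ b) {c : ℝ} (h0 : 0 < c) {n : ℕ} {δ A : ℝ} (hA : 0 ≤ A)
    (h : ∀ p q : ℕ, p % b ≠ q % b → volume.real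
      {u ∈ Ico (0 : ℝ) 1 | |strongSlope b c (n + 1) p u - strongSlope b c (n + 1) q u| ≤ δ} ≤ A) :
    closePairs b c (n + 1) δ ≤ ((b : ℝ) ^ (n + 1)) ^ 2 * A + b * closePairs b c n (δ / c) := by
  set S : ℕ → ℕ → Set ℝ :=
    fun p q => {x | |strongSlope b c n p x - strongSlope b c n q x| ≤ δ / c} with hS
  have hSm : ∀ p q, MeasurableSet (S p q) := fun p q =>
    (isClosed_le ((continuous_strongSlope b c n p).sub (continuous_strongSlope b c n q)).abs
      continuous_const).measurableSet
  have key : ∀ p q i j : ℕ, i < b → j < b → volume.real {u ∈ Ico (0 : ℝ) 1 |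
      |strongSlope b c (n + 1) (i + b * p) u - strongSlope b c (n + 1) (j + b * q) u| ≤ δ}
      ≤ A + if i = j then volume.real {u ∈ Ico (0 : ℝ) 1 | ((i : ℝ) + u) / b ∈ S p q} else 0 := by
    intro p q i j hi hj
    split_ifs with hij
    · subst hij
      refine le_add_of_nonneg_of_le hA (le_of_eq ?_)
      congr 1
      ext u
      simp only [hS, mem_ofPred_eq, strongSlope_sub_of_same_digit hb, abs_mul, abs_of_pos h0,
        le_div_iff₀ h0, mul_comm c]
    · rw [add_zero]
      refine h _ _ ?_
      simpa [Nat.add_mul_mod_self_left, Nat.mod_eq_of_lt hi, Nat.mod_eq_of_lt hj] using hij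
  rw [closePairs, pow_succ', sum_range_mul_eq]
  calc _ ≤ ∑ p ∈ Finset.range (b ^ n), ∑ i ∈ Finset.range b, ∑ q ∈ Finset.range (b ^ n),
        ∑ j ∈ Finset.range b, (A + if i = j then
          volume.real {u ∈ Ico (0 : ℝ) 1 | ((i : ℝ) + u) / b ∈ S p q} else 0) := by
        refine Finset.sum_le_sum fun p _ => Finset.sum_le_sum fun i hi => ?_
        rw [sum_range_mul_eq]
        exact Finset.sum_le_sum fun q _ => Finset.sum_le_sum fun j hj =>
          key p q i j (Finset.mem_range.1 hi) (Finset.mem_range.1 hj)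
    _ = ∑ p ∈ Finset.range (b ^ n), ∑ i ∈ Finset.range b, ∑ q ∈ Finset.range (b ^ n),
          (b * A + volume.real {u ∈ Ico (0 : ℝ) 1 | ((i : ℝ) + u) / b ∈ S p q}) := by
        refine Finset.sum_congr rfl fun p _ => Finset.sum_congr rfl fun i hi =>
          Finset.sum_congr rfl fun q _ => ?_
        rw [Finset.sum_add_distrib, Finset.sum_ite_eq, if_pos hi]
        simp
    _ = ∑ p ∈ Finset.range (b ^ n), ∑ q ∈ Finset.range (b ^ n),
          (b * (b * A) + b * volume.real {x ∈ Ico (0 : ℝ) 1 | x ∈ S p q}) := by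
        refine Finset.sum_congr rfl fun p _ => ?_
        rw [Finset.sum_comm]
        refine Finset.sum_congr rfl fun q _ => ?_
        rw [Finset.sum_add_distrib, sum_volumeReal_branches (by omega) (hSm p q)]
        simp
    _ = _ := by
        simp_rw [Finset.sum_add_distrib, ← Finset.mul_sum]
        rw [closePairs]
        congr 1
        simp
        ring

theorem exists_closePairs_le {b : ℕ} (hb : 2 ≤ b) {c : ℝ} (h0 : 0 < c) (h1 : c < 1)
    (hc : 1 < b * c) (hneg : hBBR b (b * c)⁻¹ < 0) :
    ∃ C > 0, ∀ n : ℕ, ∀ δ > 0, closePairs b c n δ ≤ ((b : ℝ) ^ n) ^ 2 * (C * δ + b / b ^ n) := by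
  have hb1 : (1 : ℝ) ≤ b := by exact_mod_cast (by omega : 1 ≤ b)
  obtain ⟨ε, hε, hT⟩ := transversality hb h0 h1 hneg
  obtain ⟨C₀, hC₀, hV⟩ := volume_sublevel_le hε (K := 2 * (2 * π) ^ 3) (by positivity)
  have hl : (b * c : ℝ)⁻¹ < 1 := inv_lt_one_of_one_lt₀ hc
  set C := C₀ / (1 - (b * c : ℝ)⁻¹) with hC
  have hCpos : 0 < C := div_pos hC₀ (by linarith)
  have hCeq : C₀ + C * (b * c : ℝ)⁻¹ = C := by
    have : C * (1 - (b * c : ℝ)⁻¹) = C₀ := div_mul_cancel₀ _ (by linarith)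
    linarith
  refine ⟨C, hCpos, fun n => ?_⟩
  have small : ∀ n ≤ 1, ∀ δ > 0,
      closePairs b c n δ ≤ ((b : ℝ) ^ n) ^ 2 * (C * δ + b / b ^ n) := by
    intro n hn δ hδ
    refine (closePairs_le_sq b c n δ).trans (le_mul_of_one_le_right (by positivity) ?_)
    have : 1 ≤ (b : ℝ) / b ^ n := by
      rw [one_le_div (by positivity)]
      exact (pow_le_pow_right₀ hb1 hn).trans (by simp)
    have : 0 < C * δ := by positivity
    linarith
  induction n with
  | zero => exact small 0 zero_le_one
  | succ n ih =>
    rcases n with _ | n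
    · exact small 1 le_rfl
    intro δ hδ
    have hA : ∀ p q : ℕ, p % b ≠ q % b → volume.real {u ∈ Ico (0 : ℝ) 1 |
        |strongSlope b c (n + 1 + 1) p u - strongSlope b c (n + 1 + 1) q u| ≤ δ} ≤ C₀ * δ := by
      intro p q hpq
      refine hV (fun u => strongSlope b c (n + 2) p u - strongSlope b c (n + 2) q u)
        (fun u => curvature b c (n + 2) p u - curvature b c (n + 2) q u) (fun u v => ?_)
        (hT n p q hpq) δ hδ
      have e1 := abs_strongSlope_taylor b hb h0 h1 (n + 2) p u v
      have e2 := abs_strongSlope_taylor b hb h0 h1 (n + 2) q u v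
      have e3 := abs_sub (strongSlope b c (n + 2) p v - strongSlope b c (n + 2) p u
        - curvature b c (n + 2) p u * (v - u)) (strongSlope b c (n + 2) q v
          - strongSlope b c (n + 2) q u - curvature b c (n + 2) q u * (v - u))
      refine le_trans (le_of_eq ?_) (e3.trans (by linarith))
      congr 1
      ring
    refine (closePairs_succ_le hb h0 (by positivity) hA).trans ?_
    have := ih (δ / c) (by positivity)
    have hb0 : (b : ℝ) ≠ 0 := by positivity
    calc _ ≤ ((b : ℝ) ^ (n + 1 + 1)) ^ 2 * (C₀ * δ)
          + b * (((b : ℝ) ^ (n + 1)) ^ 2 * (C * (δ / c) + b / b ^ (n + 1))) := by gcongr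
      _ = ((b : ℝ) ^ (n + 1 + 1)) ^ 2 *
          ((C₀ + C * (b * c : ℝ)⁻¹) * δ + b / b ^ (n + 1 + 1)) := by
          field_simp
          ring
      _ = _ := by rw [hCeq]

/-! ### Balls on the graph -/

/-- The parameters whose graph points are at sup-distance at most `r` from the one over `x`. -/
def nearby (W : ℝ → ℝ) (x r : ℝ) : Set ℝ := {y | |y - x| ≤ r ∧ |W y - W x| ≤ r}

theorem nearby_mono (W : ℝ → ℝ) (x : ℝ) {r s : ℝ} (h : r ≤ s) : nearby W x r ⊆ nearby W x s :=
  fun _ hy => ⟨hy.1.trans h, hy.2.trans h⟩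

theorem nearby_subset_Icc (W : ℝ → ℝ) (x r : ℝ) : nearby W x r ⊆ Icc (x - r) (x + r) := by
  rintro y ⟨hy, -⟩
  rw [abs_le] at hy
  exact ⟨by linarith, by linarith⟩

theorem volume_nearby_ne_top (W : ℝ → ℝ) (x r : ℝ) : volume (nearby W x r) ≠ ⊤ :=
  measure_ne_top_of_subset (nearby_subset_Icc W x r) (by simp)

theorem volumeReal_nearby_mono (W : ℝ → ℝ) (x : ℝ) {r s : ℝ} (h : r ≤ s) :
    volume.real (nearby W x r) ≤ volume.real (nearby W x s) :=
  measureReal_mono (nearby_mono W x h) (volume_nearby_ne_top W x s)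

theorem volumeReal_nearby_le (W : ℝ → ℝ) (x : ℝ) {r : ℝ} (hr : 0 ≤ r) :
    volume.real (nearby W x r) ≤ 2 * r := by
  refine (measureReal_mono (nearby_subset_Icc W x r) (by simp)).trans ?_
  rw [Real.volume_real_Icc_of_le (by linarith)]
  linarith

theorem measurableSet_nearby {W : ℝ → ℝ} (hW : Continuous W) (x r : ℝ) :
    MeasurableSet (nearby W x r) :=
  ((isClosed_le (by fun_prop) (by fun_prop)).and
    (isClosed_le (by fun_prop) (by fun_prop))).measurableSet

theorem measurable_volumeReal_nearby {W : ℝ → ℝ} (hW : Continuous W) (r : ℝ) :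
    Measurable fun x => volume.real (nearby W x r) := by
  have : MeasurableSet {z : ℝ × ℝ | |z.2 - z.1| ≤ r ∧ |W z.2 - W z.1| ≤ r} :=
    ((isClosed_le (by fun_prop) (by fun_prop)).and
      (isClosed_le (by fun_prop) (by fun_prop))).measurableSet
  exact (measurable_measure_prodMk_left this).ennreal_toReal

/-- The part within `r` of `u` of the strip around the line of slope `-g` through the graph
point over `u`. -/
def strip (W : ℝ → ℝ) (u g r K : ℝ) : Set ℝ :=
  {v | |v - u| ≤ r ∧ |g * (v - u) + (W v - W u)| ≤ K * r ^ 2}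

theorem measurableSet_strip {W : ℝ → ℝ} (hW : Continuous W) (u g r K : ℝ) :
    MeasurableSet (strip W u g r K) :=
  ((isClosed_le (by fun_prop) (by fun_prop)).and
    (isClosed_le (by fun_prop) (by fun_prop))).measurableSet

theorem volume_strip_ne_top (W : ℝ → ℝ) (u g r K : ℝ) : volume (strip W u g r K) ≠ ⊤ := by
  have : strip W u g r K ⊆ Icc (u - r) (u + r) := by
    rintro y ⟨hy, -⟩
    rw [abs_le] at hy
    exact ⟨by linarith, by linarith⟩
  exact measure_ne_top_of_subset this (by simp)

theorem volumeReal_nearby_le_strip {b : ℕ} (hb : 2 ≤ b) {c : ℝ} (h0 : 0 < c) (h1 : c < 1)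
    (hc : 1 < b * c) (n p : ℕ) (u : ℝ) :
    (b : ℝ) ^ n * volume.real (nearby (Wc b (b * c)⁻¹) ((p + u) / (b : ℝ) ^ n) ((c / b) ^ n))
      ≤ volume.real (strip (Wc b (b * c)⁻¹) u (strongSlope b c n p u) (c ^ n) (1 + (2 * π) ^ 2)) := by
  have hb0 : (0 : ℝ) < b := by positivity
  have hbn : (0 : ℝ) < (b : ℝ) ^ n := by positivity
  rw [← volumeReal_affine_preimage hbn p]
  refine measureReal_mono ?_ (volume_strip_ne_top _ _ _ _ _)
  rintro v ⟨hv1, hv2⟩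
  have e1 : |v - u| ≤ c ^ n := by
    rw [← sub_div, abs_div, abs_of_pos hbn, div_le_iff₀ hbn, div_pow, div_mul_cancel₀ _ hbn.ne'] at hv1
    simpa using hv1
  refine ⟨e1, ?_⟩
  rw [Wc_eq_smoothPart b hb hc, Wc_eq_smoothPart b hb hc, ← mul_sub, abs_mul,
    abs_of_pos (by positivity), inv_pow, inv_mul_le_iff₀ (by positivity), ← mul_pow,
    show (b : ℝ) * c * (c / b) = c * c by field_simp, mul_pow, ← sq] at hv2
  have e2 := abs_smoothPart_taylor b hb h0 h1 n p u v
  have e3 : (v - u) ^ 2 ≤ (c ^ n) ^ 2 := sq_le_sq' (by linarith [neg_abs_le (v - u)])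
    (by linarith [le_abs_self (v - u)])
  have e4 := abs_sub (smoothPart b c n p v + Wc b (b * c)⁻¹ v
    - (smoothPart b c n p u + Wc b (b * c)⁻¹ u))
    (smoothPart b c n p v - smoothPart b c n p u - strongSlope b c n p u * (v - u))
  have e5 : (2 * π) ^ 2 * (v - u) ^ 2 ≤ (2 * π) ^ 2 * (c ^ n) ^ 2 := by gcongr
  refine le_trans (le_of_eq ?_) (e4.trans (by linarith))
  congr 1
  ring

theorem sum_volumeReal_le_of_count {ι κ : Type*} (s : Finset ι) (t : Finset κ) {A : ι → Set ℝ}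
    {B : κ → Set ℝ} {w : κ → ℝ} (hA : ∀ i ∈ s, MeasurableSet (A i))
    (hA' : ∀ i ∈ s, volume (A i) ≠ ⊤) (hB : ∀ k ∈ t, MeasurableSet (B k))
    (hB' : ∀ k ∈ t, volume (B k) ≠ ⊤)
    (h : ∀ v, ∑ i ∈ s, (A i).indicator (1 : ℝ → ℝ) v
      ≤ ∑ k ∈ t, w k * (B k).indicator (1 : ℝ → ℝ) v) :
    ∑ i ∈ s, volume.real (A i) ≤ ∑ k ∈ t, w k * volume.real (B k) := by
  have iA : ∀ i ∈ s, Integrable ((A i).indicator (1 : ℝ → ℝ)) := fun i hi =>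
    (integrable_indicator_iff (hA i hi)).2 (integrableOn_const (hA' i hi))
  have iB : ∀ k ∈ t, Integrable (fun v => w k * (B k).indicator (1 : ℝ → ℝ) v) := fun k hk =>
    ((integrable_indicator_iff (hB k hk)).2 (integrableOn_const (hB' k hk))).const_mul _
  calc ∑ i ∈ s, volume.real (A i) = ∫ v, ∑ i ∈ s, (A i).indicator (1 : ℝ → ℝ) v := by
        rw [integral_finsetSum _ iA]
        exact Finset.sum_congr rfl fun i hi => (integral_indicator_one (hA i hi)).symm
    _ ≤ ∫ v, ∑ k ∈ t, w k * (B k).indicator (1 : ℝ → ℝ) v :=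
        integral_mono (integrable_finsetSum _ iA) (integrable_finsetSum _ iB) h
    _ = _ := by
        rw [integral_finsetSum _ iB]
        refine Finset.sum_congr rfl fun k hk => ?_
        rw [integral_const_mul, integral_indicator_one (hB k hk)]

theorem exists_scale {c t : ℝ} (h0 : 0 < c) (h1 : c < 1) (n : ℕ) (ht : t ≤ c ^ n) :
    ∃ k ≤ n, t ≤ c ^ (n + k) ∧ (k = n ∨ c ^ (n + k + 1) < t) := by
  rcases le_or_gt t (c ^ (n + n)) with h | h
  · exact ⟨n, le_rfl, h, Or.inl rfl⟩
  · obtain ⟨m, hm1, hm2⟩ := exists_nat_pow_near_of_lt_one (lt_trans (by positivity) h)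
      (ht.trans (pow_le_one₀ h0.le h1.le)) h0 h1
    have a : n < m + 1 := (pow_lt_pow_iff_right_of_lt_one₀ h0 h1).1 (hm1.trans_le ht)
    have b : m < n + n := (pow_lt_pow_iff_right_of_lt_one₀ h0 h1).1 (h.trans_le hm2)
    obtain ⟨k, rfl⟩ : ∃ k, m = n + k := ⟨m - n, by omega⟩
    exact ⟨k, by omega, hm2, Or.inr hm1⟩

/-- If slopes are well spread and the graph has small balls around `u`, then on average the strips
around the graph point over `u` are small. -/
theorem sum_strip_le {W : ℝ → ℝ} (hW : Continuous W) {c K L C Q d u : ℝ} (h0 : 0 < c) (h1 : c < 1)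
    (hd : 1 ≤ d) (hK : 1 ≤ K) (hC : 0 ≤ C) (n : ℕ) (s : Finset ℕ) (g : ℕ → ℝ)
    (hg : ∀ p ∈ s, |g p| ≤ L) (hcard : (s.card : ℝ) ≤ Q)
    (hnear : ∀ k ≤ n, volume.real (nearby W u ((L + K) * c ^ (n + k))) ≤ C * (c ^ (n + k)) ^ d)
    (hgood : ∀ p ∈ s, ∀ k ≤ n,
      ((s.filter fun q => |g q - g p| ≤ 2 * K / c * c ^ k).card : ℝ) ≤ Q * c ^ k) :
    ∑ p ∈ s, volume.real (strip W u (g p) (c ^ n) K) ≤ (n + 1) * (Q * C * (c ^ n) ^ (1 + d)) := by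
  have hQ : 0 ≤ Q := (Nat.cast_nonneg _).trans hcard
  have count := sum_volumeReal_le_of_count s (Finset.range (n + 1))
    (A := fun p => strip W u (g p) (c ^ n) K) (B := fun k => nearby W u ((L + K) * c ^ (n + k)))
    (w := fun k => Q * c ^ (n - k)) (fun p _ => measurableSet_strip hW _ _ _ _)
    (fun p _ => volume_strip_ne_top _ _ _ _ _) (fun k _ => measurableSet_nearby hW _ _)
    (fun k _ => volume_nearby_ne_top _ _ _) ?_
  · refine count.trans ?_
    have : ∀ k ∈ Finset.range (n + 1), Q * c ^ (n - k) *
        volume.real (nearby W u ((L + K) * c ^ (n + k))) ≤ Q * C * (c ^ n) ^ (1 + d) := by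
      intro k hk
      have hk : k ≤ n := by simpa [Nat.lt_succ_iff] using hk
      calc _ ≤ Q * c ^ (n - k) * (C * (c ^ (n + k)) ^ d) := by
            gcongr
            exact hnear k hk
        _ = Q * C * (c ^ (n - k) * (c ^ (n + k)) ^ d) := by ring
        _ ≤ Q * C * (c ^ n) ^ (1 + d) := by
            gcongr
            rw [← Real.rpow_natCast, ← Real.rpow_natCast, ← Real.rpow_natCast, ← Real.rpow_mul h0.le,
              ← Real.rpow_mul h0.le, ← Real.rpow_add h0]
            refine Real.rpow_le_rpow_of_exponent_ge h0 h1.le ?_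
            push_cast [Nat.cast_sub hk]
            nlinarith [(Nat.cast_nonneg k : (0 : ℝ) ≤ k)]
    refine (Finset.sum_le_sum this).trans (le_of_eq ?_)
    simp
  · intro v
    have hind : ∀ k ∈ Finset.range (n + 1),
        0 ≤ Q * c ^ (n - k) * (nearby W u ((L + K) * c ^ (n + k))).indicator (1 : ℝ → ℝ) v :=
      fun k _ => mul_nonneg (by positivity) (indicator_nonneg (fun _ _ => zero_le_one) _)
    classical
    have hsum : ∑ p ∈ s, (strip W u (g p) (c ^ n) K).indicator (1 : ℝ → ℝ) v
        = ((s.filter fun p => v ∈ strip W u (g p) (c ^ n) K).card : ℝ) := by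
      simp [Set.indicator_apply]
    rw [hsum]
    rcases (s.filter fun p => v ∈ strip W u (g p) (c ^ n) K).eq_empty_or_nonempty with he | ⟨p₀, hp₀⟩
    · rw [he]
      simpa using Finset.sum_nonneg hind
    rw [Finset.mem_filter] at hp₀
    obtain ⟨hp₀s, hv1, hv2⟩ := hp₀
    obtain ⟨k, hk, hk1, hk2⟩ := exists_scale h0 h1 n hv1
    refine le_trans ?_ (Finset.single_le_sum hind (Finset.mem_range.2 (Nat.lt_succ_iff.2 hk)))
    have hcn : (c ^ n) ^ 2 ≤ c ^ (n + k) := by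
      rw [← pow_mul]
      exact pow_le_pow_of_le_one h0.le h1.le (by omega)
    have hL : 0 ≤ L := (abs_nonneg _).trans (hg p₀ hp₀s)
    have hmem : v ∈ nearby W u ((L + K) * c ^ (n + k)) := by
      refine ⟨hk1.trans (le_mul_of_one_le_left (by positivity) (by linarith)), ?_⟩
      have e := abs_sub (g p₀ * (v - u) + (W v - W u)) (g p₀ * (v - u))
      rw [add_sub_cancel_left, abs_mul] at e
      have e1 : |g p₀| * |v - u| ≤ L * c ^ (n + k) := by
        gcongr
        exact hg p₀ hp₀s
      have e2 : K * (c ^ n) ^ 2 ≤ K * c ^ (n + k) := by gcongr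
      linarith
    rw [Set.indicator_of_mem hmem, Pi.one_apply, mul_one]
    rcases hk2 with rfl | hk2
    · rw [Nat.sub_self, pow_zero, mul_one]
      refine le_trans ?_ hcard
      exact_mod_cast Finset.card_le_card (Finset.filter_subset _ _)
    · refine le_trans ?_ (hgood p₀ hp₀s (n - k) (Nat.sub_le _ _))
      refine Nat.cast_le.2 (Finset.card_le_card fun q hq => ?_)
      rw [Finset.mem_filter] at hq ⊢
      obtain ⟨hqs, hq1, hq2⟩ := hq
      refine ⟨hqs, ?_⟩
      have e := abs_sub (g q * (v - u) + (W v - W u)) (g p₀ * (v - u) + (W v - W u))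
      rw [show g q * (v - u) + (W v - W u) - (g p₀ * (v - u) + (W v - W u))
        = (g q - g p₀) * (v - u) by ring, abs_mul] at e
      have e1 : |g q - g p₀| * c ^ (n + k + 1) ≤ 2 * K * (c ^ n) ^ 2 := by
        calc |g q - g p₀| * c ^ (n + k + 1) ≤ |g q - g p₀| * |v - u| := by gcongr
          _ ≤ _ := by linarith
      have e2 : 2 * K * (c ^ n) ^ 2 = 2 * K / c * c ^ (n - k) * c ^ (n + k + 1) := by
        rw [mul_assoc (2 * K / c), ← pow_add, show n - k + (n + k + 1) = n * 2 + 1 by omega,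
          pow_succ c, pow_mul c]
        field_simp
      rw [e2] at e1
      exact le_of_mul_le_mul_right e1 (by positivity)

/-! ### Bootstrapping the small ball exponent -/

/-- Outside a set of parameters of measure at most `C * R ^ η`, the balls on the graph of radius
at most `R` have mass at most `C * r ^ d`. -/
def SmallBalls (W : ℝ → ℝ) (d : ℝ) : Prop :=
  ∃ C ≥ (1 : ℝ), ∃ η > (0 : ℝ), ∀ R > (0 : ℝ),
    volume {u ∈ Ico (0 : ℝ) 1 | ∃ r, 0 < r ∧ r ≤ R ∧ C * r ^ d < volume.real (nearby W u r)}
      ≤ ENNReal.ofReal (C * R ^ η)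

theorem smallBalls_one (W : ℝ → ℝ) : SmallBalls W 1 := by
  refine ⟨2, by norm_num, 1, one_pos, fun R _ => ?_⟩
  have : {u ∈ Ico (0 : ℝ) 1 | ∃ r, 0 < r ∧ r ≤ R ∧ 2 * r ^ (1 : ℝ) < volume.real (nearby W u r)}
      = ∅ := by
    refine eq_empty_of_forall_notMem ?_
    rintro u ⟨-, r, hr, -, h⟩
    rw [Real.rpow_one] at h
    exact absurd (volumeReal_nearby_le W u hr.le) (not_le.2 h)
  rw [this]
  simp

theorem exists_succ_mul_pow_le {x : ℝ} (h0 : 0 ≤ x) (h1 : x < 1) :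
    ∃ M, ∀ n : ℕ, ((n : ℝ) + 1) * x ^ n ≤ M := by
  obtain ⟨M, hM⟩ := ((tendsto_self_mul_const_pow_of_lt_one h0 h1).add
    (tendsto_pow_atTop_nhds_zero_of_lt_one h0 h1)).bddAbove_range
  refine ⟨M, fun n => ?_⟩
  have := hM ⟨n, rfl⟩
  simp only at this
  linarith

section

variable {b : ℕ} {c : ℝ}

/-- The parameters at which the slope of the branch `p` has more than `m` neighbours within
distance `δ`. -/
def crowded (b : ℕ) (c : ℝ) (n : ℕ) (δ m : ℝ) (p : ℕ) : Set ℝ :=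
  {u ∈ Ico (0 : ℝ) 1 | m < (((Finset.range (b ^ n)).filter fun q =>
    |strongSlope b c n q u - strongSlope b c n p u| ≤ δ).card : ℝ)}

theorem card_filter_eq_sum_indicator (n : ℕ) (δ : ℝ) (p : ℕ) (u : ℝ) :
    (((Finset.range (b ^ n)).filter fun q =>
      |strongSlope b c n q u - strongSlope b c n p u| ≤ δ).card : ℝ)
    = ∑ q ∈ Finset.range (b ^ n),
      {u | |strongSlope b c n q u - strongSlope b c n p u| ≤ δ}.indicator (1 : ℝ → ℝ) u := by
  simp [Set.indicator_apply]

theorem measurableSet_close (n : ℕ) (δ : ℝ) (p q : ℕ) :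
    MeasurableSet {u | |strongSlope b c n q u - strongSlope b c n p u| ≤ δ} :=
  (isClosed_le ((continuous_strongSlope b c n q).sub (continuous_strongSlope b c n p)).abs
    continuous_const).measurableSet

theorem measurableSet_crowded (n : ℕ) (δ m : ℝ) (p : ℕ) :
    MeasurableSet (crowded b c n δ m p) := by
  simp_rw [crowded, card_filter_eq_sum_indicator]
  have hm : Measurable fun u => ∑ q ∈ Finset.range (b ^ n),
      {u | |strongSlope b c n q u - strongSlope b c n p u| ≤ δ}.indicator (1 : ℝ → ℝ) u :=
    Finset.measurable_fun_sum _ fun q _ =>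
      measurable_one.indicator (measurableSet_close n δ p q)
  exact measurableSet_Ico.inter (measurableSet_lt measurable_const hm)

theorem volume_crowded_ne_top (n : ℕ) (δ m : ℝ) (p : ℕ) : volume (crowded b c n δ m p) ≠ ⊤ :=
  measure_ne_top_of_subset (sep_subset _ _) (by simp)

theorem sum_volumeReal_crowded_le (n : ℕ) (δ : ℝ) {m : ℝ} (hm : 0 < m) :
    ∑ p ∈ Finset.range (b ^ n), volume.real (crowded b c n δ m p)
      ≤ m⁻¹ * closePairs b c n δ := by
  rw [closePairs, Finset.mul_sum]
  refine Finset.sum_le_sum fun p _ => ?_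
  have := sum_volumeReal_le_of_count {p} (Finset.range (b ^ n)) (A := crowded b c n δ m)
    (B := fun q => {u ∈ Ico (0 : ℝ) 1 | |strongSlope b c n p u - strongSlope b c n q u| ≤ δ})
    (w := fun _ => m⁻¹) (fun p _ => measurableSet_crowded n δ m p)
    (fun p _ => volume_crowded_ne_top n δ m p)
    (fun q _ => measurableSet_Ico.inter (measurableSet_close n δ q p))
    (fun q _ => measure_ne_top_of_subset (sep_subset _ _) (by simp)) (fun u => ?_)
  · rwa [Finset.sum_singleton, ← Finset.mul_sum] at this
  · rw [Finset.sum_singleton, ← Finset.mul_sum]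
    by_cases hu : u ∈ crowded b c n δ m p
    · rw [indicator_of_mem hu, Pi.one_apply, ← div_eq_inv_mul, one_le_div hm]
      obtain ⟨hu1, hu2⟩ := hu
      refine hu2.le.trans ?_
      rw [card_filter_eq_sum_indicator]
      refine Finset.sum_le_sum fun q _ => le_of_eq ?_
      simp [Set.indicator_apply, hu1.1, hu1.2, abs_sub_comm]
    · rw [indicator_of_notMem hu]
      exact mul_nonneg (by positivity) (Finset.sum_nonneg fun q _ =>
        indicator_nonneg (fun _ _ => zero_le_one) _)

/-- The measure of the parameters whose ball of radius `(c / b) ^ n` is heavy. -/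
theorem exists_volumeReal_heavy_le (hb : 2 ≤ b) (h0 : 0 < c) (h1 : c < 1) (hc : 1 < b * c)
    (hneg : hBBR b (b * c)⁻¹ < 0) {d τ : ℝ} (hd : 1 ≤ d) (hτ0 : 0 < τ) (hτ1 : τ < 1)
    (hS : SmallBalls (Wc b (b * c)⁻¹) d) :
    ∃ A σ : ℝ, 0 ≤ A ∧ 0 < σ ∧ σ < 1 ∧ ∀ n : ℕ, volume.real {x ∈ Ico (0 : ℝ) 1 |
      (c ^ n) ^ (1 + d) / ((b : ℝ) ^ n * (τ ^ n) ^ 2)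
        < volume.real (nearby (Wc b (b * c)⁻¹) x ((c / b) ^ n))} ≤ A * σ ^ n := by
  set W := Wc b (b * c)⁻¹ with hWdef
  have hb1 : (1 : ℝ) ≤ b := by exact_mod_cast (by omega : 1 ≤ b)
  have hb0 : (0 : ℝ) < b := by linarith
  have hW : Continuous W := continuous_Wc b (by positivity) (inv_lt_one_of_one_lt₀ hc)
  obtain ⟨C, hC, η, hη, hbad⟩ := hS
  obtain ⟨C₂, hC₂, hpairs⟩ := exists_closePairs_le hb h0 h1 hc hneg
  set K : ℝ := 1 + (2 * π) ^ 2 with hK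
  set L : ℝ := 2 * π * (c / (1 - c)) with hL
  have hK1 : 1 ≤ K := by rw [hK]; linarith [sq_nonneg (2 * π)]
  have hL0 : 0 ≤ L := by
    have : 0 < 1 - c := by linarith
    positivity
  have hLK : 0 < L + K := by linarith
  set C₁ : ℝ := C * (L + K) ^ d with hC₁
  have hC₁0 : 0 ≤ C₁ := by positivity
  set C₃ : ℝ := C₂ * (2 * K / c) + b with hC₃
  have hC₃0 : 0 ≤ C₃ := by positivity
  have main : ∀ n : ℕ, volume.real {x ∈ Ico (0 : ℝ) 1 |
      (c ^ n) ^ (1 + d) / ((b : ℝ) ^ n * (τ ^ n) ^ 2) < volume.real (nearby W x ((c / b) ^ n))}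
      ≤ C * ((L + K) * c ^ n) ^ η + (n + 1) * τ ^ n * (C₁ + C₃) := by
    intro n
    set θ : ℝ := (c ^ n) ^ (1 + d) / ((b : ℝ) ^ n * (τ ^ n) ^ 2) with hθ
    have hcn : 0 < c ^ n := by positivity
    have hbn : (0 : ℝ) < (b : ℝ) ^ n := by positivity
    have hτn : 0 < τ ^ n := by positivity
    have hθ0 : 0 < θ := by positivity
    set Q : ℝ := (b : ℝ) ^ n / τ ^ n with hQ
    have hQ0 : 0 < Q := by positivity
    set R : ℝ := (L + K) * c ^ n with hR
    have hR0 : 0 < R := by positivity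
    set B := toMeasurable volume {u ∈ Ico (0 : ℝ) 1 |
      ∃ r, 0 < r ∧ r ≤ R ∧ C * r ^ d < volume.real (nearby W u r)} with hB
    have hBvol : volume B ≤ ENNReal.ofReal (C * R ^ η) := by
      rw [hB, measure_toMeasurable]
      exact hbad R hR0
    have hBtop : volume B ≠ ⊤ := ne_top_of_le_ne_top ENNReal.ofReal_ne_top hBvol
    have hBreal : volume.real B ≤ C * R ^ η := ENNReal.toReal_le_of_le_ofReal (by positivity) hBvol
    have hBm : MeasurableSet B := measurableSet_toMeasurable _ _
    set S : Set ℝ := {x | θ < volume.real (nearby W x ((c / b) ^ n))} with hS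
    have hSm : MeasurableSet S :=
      measurableSet_lt measurable_const (measurable_volumeReal_nearby hW _)
    set E : ℕ → Set ℝ := fun p => {u ∈ Ico (0 : ℝ) 1 | ((p : ℝ) + u) / (b ^ n : ℕ) ∈ S} with hE
    have hEm : ∀ p, MeasurableSet (E p) := fun p =>
      measurableSet_Ico.inter (hSm.preimage (f := fun u : ℝ => ((p : ℝ) + u) / (b ^ n : ℕ))
        (by fun_prop))
    set H : ℕ → ℕ → Set ℝ := fun p k => crowded b c n (2 * K / c * c ^ k) (Q * c ^ k) p with hH
    set F : ℕ → Set ℝ := fun p => E p \ (B ∪ ⋃ k ∈ Finset.range (n + 1), H p k) with hF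
    have hFm : ∀ p, MeasurableSet (F p) := fun p => (hEm p).diff (hBm.union
      (Finset.measurableSet_biUnion _ fun k _ => measurableSet_crowded n _ _ p))
    have hFtop : ∀ p, volume (F p) ≠ ⊤ := fun p =>
      measure_ne_top_of_subset (sdiff_subset.trans (sep_subset _ _)) (by simp)
    have hEle : ∀ p, volume.real (E p) ≤ volume.real B
        + ∑ k ∈ Finset.range (n + 1), volume.real (H p k) + volume.real (F p) := by
      intro p
      have hHsub : ⋃ k ∈ Finset.range (n + 1), H p k ⊆ Ico (0 : ℝ) 1 :=
        iUnion₂_subset fun k _ => sep_subset _ _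
      have hHtop : volume (⋃ k ∈ Finset.range (n + 1), H p k) ≠ ⊤ :=
        measure_ne_top_of_subset hHsub (by simp)
      have hsub : E p ⊆ (B ∪ ⋃ k ∈ Finset.range (n + 1), H p k) ∪ F p := by
        rw [hF, union_sdiff_self]
        exact subset_union_right
      refine (measureReal_mono hsub (measure_union_ne_top
        (measure_union_ne_top hBtop hHtop) (hFtop p))).trans ?_
      refine (measureReal_union_le _ _).trans (add_le_add_left ?_ _)
      refine (measureReal_union_le _ _).trans (add_le_add_right ?_ _)
      exact measureReal_biUnion_finset_le _ _
    have hHsum : ∑ p ∈ Finset.range (b ^ n), ∑ k ∈ Finset.range (n + 1), volume.real (H p k)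
        ≤ (b : ℝ) ^ n * ((n + 1) * τ ^ n * C₃) := by
      rw [Finset.sum_comm]
      have : ∀ k ∈ Finset.range (n + 1), ∑ p ∈ Finset.range (b ^ n), volume.real (H p k)
          ≤ (b : ℝ) ^ n * (τ ^ n * C₃) := by
        intro k hk
        have hk : k ≤ n := by simpa [Nat.lt_succ_iff] using hk
        have hck : 0 < c ^ k := by positivity
        refine (sum_volumeReal_crowded_le n _ (by positivity)).trans ?_
        have h2 : (b : ℝ) / b ^ n ≤ b * c ^ k := by
          rw [div_eq_mul_inv]
          gcongr
          calc ((b : ℝ) ^ n)⁻¹ ≤ c ^ n := by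
                rw [inv_le_iff_one_le_mul₀' hbn, ← mul_pow]
                exact one_le_pow₀ hc.le
            _ ≤ c ^ k := pow_le_pow_of_le_one h0.le h1.le hk
        calc _ ≤ (Q * c ^ k)⁻¹ * (((b : ℝ) ^ n) ^ 2 * (C₂ * (2 * K / c * c ^ k) + b * c ^ k)) := by
              gcongr
              exact (hpairs n _ (by positivity)).trans (by gcongr)
          _ = _ := by
              rw [hQ, hC₃]
              field_simp
      refine (Finset.sum_le_sum this).trans (le_of_eq ?_)
      simp
      ring
    have hFsum : ∑ p ∈ Finset.range (b ^ n), volume.real (F p)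
        ≤ (b : ℝ) ^ n * ((n + 1) * τ ^ n * C₁) := by
      have := sum_volumeReal_le_of_count (Finset.range (b ^ n)) {()} (A := F)
        (B := fun _ => Ico (0 : ℝ) 1) (w := fun _ => (b : ℝ) ^ n * ((n + 1) * τ ^ n * C₁))
        (fun p _ => hFm p) (fun p _ => hFtop p) (fun _ _ => measurableSet_Ico)
        (fun _ _ => by simp) (fun u => ?_)
      · simpa using this
      rw [Finset.sum_singleton]
      by_cases hu : u ∈ Ico (0 : ℝ) 1 ∧ u ∉ B
      swap
      · rw [Finset.sum_eq_zero]
        · exact mul_nonneg (by positivity) (indicator_nonneg (fun _ _ => zero_le_one) _)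
        · intro p _
          refine indicator_of_notMem (fun hp => hu ⟨hp.1.1, fun h => hp.2 (Or.inl h)⟩) _
      obtain ⟨huI, huB⟩ := hu
      rw [indicator_of_mem huI, Pi.one_apply, mul_one]
      classical
      set s := (Finset.range (b ^ n)).filter fun p => u ∈ F p with hs
      have hsum : ∑ p ∈ Finset.range (b ^ n), (F p).indicator (1 : ℝ → ℝ) u = (s.card : ℝ) := by
        simp only [Set.indicator_apply, Pi.one_apply]
        rw [Finset.sum_boole]
      rw [hsum]
      have hsF : ∀ p ∈ s, u ∈ F p := fun p hp => (Finset.mem_filter.1 hp).2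
      have hstrip := sum_strip_le hW (K := K) (L := L) (C := C₁) (Q := Q) (u := u) h0 h1 hd hK1
        hC₁0 n s (fun p => strongSlope b c n p u) (fun p _ => abs_strongSlope_le b h0 h1 n p u)
        ?_ ?_ ?_
      · have hlow : ∀ p ∈ s, (b : ℝ) ^ n * θ
            ≤ volume.real (strip W u (strongSlope b c n p u) (c ^ n) K) := by
          intro p hp
          have h3 := (hsF p hp).1.2
          simp only [hS, mem_ofPred_eq, Nat.cast_pow] at h3
          refine le_trans ?_ (volumeReal_nearby_le_strip hb h0 h1 hc n p u)
          gcongr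
        have h4 := (Finset.card_nsmul_le_sum s _ _ hlow).trans hstrip
        rw [nsmul_eq_mul] at h4
        have h5 : ((n : ℝ) + 1) * (Q * C₁ * (c ^ n) ^ (1 + d))
            = (b : ℝ) ^ n * ((n + 1) * τ ^ n * C₁) * ((b : ℝ) ^ n * θ) := by
          rw [hQ, hθ]
          field_simp
        rw [h5] at h4
        exact le_of_mul_le_mul_right h4 (by positivity)
      · calc (s.card : ℝ) ≤ (b : ℝ) ^ n := by
              have := Finset.card_le_card (Finset.filter_subset (fun p => u ∈ F p)
                (Finset.range (b ^ n)))
              rw [Finset.card_range] at this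
              exact_mod_cast this
          _ ≤ Q := by
              rw [hQ, le_div_iff₀ hτn]
              exact mul_le_of_le_one_right hbn.le (pow_le_one₀ hτ0.le hτ1.le)
      · intro k _
        have hr : 0 < (L + K) * c ^ (n + k) := by positivity
        by_contra! hcon
        refine huB (subset_toMeasurable _ _ ⟨huI, (L + K) * c ^ (n + k), hr, ?_, ?_⟩)
        · rw [hR]
          gcongr ?_ * ?_
          exact pow_le_pow_of_le_one h0.le h1.le (by omega)
        · rwa [Real.mul_rpow hLK.le (by positivity), ← mul_assoc]
      · intro p hp k hk
        have h3 := (hsF p hp).2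
        have h6 : u ∉ H p k := fun h => h3 (Or.inr (mem_iUnion₂.2
          ⟨k, Finset.mem_range.2 (Nat.lt_succ_iff.2 hk), h⟩))
        have h7 := not_lt.1 fun h => h6 ⟨huI, h⟩
        refine le_trans ?_ h7
        exact_mod_cast Finset.card_le_card
          (Finset.filter_subset_filter _ (Finset.filter_subset _ _))
    have htot := sum_volumeReal_branches (m := b ^ n) (by positivity) hSm
    have h8 : (b : ℝ) ^ n * volume.real {x ∈ Ico (0 : ℝ) 1 | x ∈ S}
        ≤ (b : ℝ) ^ n * (C * R ^ η + (n + 1) * τ ^ n * (C₁ + C₃)) := by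
      have h9 := Finset.sum_le_sum fun p (_ : p ∈ Finset.range (b ^ n)) => hEle p
      rw [Finset.sum_add_distrib, Finset.sum_add_distrib] at h9
      simp only [Finset.sum_const, Finset.card_range, nsmul_eq_mul] at h9
      push_cast at h9 htot
      rw [← htot]
      simp only [hE, Nat.cast_pow] at h9
      have h10 : (b : ℝ) ^ n * volume.real B ≤ (b : ℝ) ^ n * (C * R ^ η) := by gcongr
      linarith
    exact le_of_mul_le_mul_left h8 hbn
  obtain ⟨M, hM⟩ := exists_succ_mul_pow_le (Real.sqrt_nonneg τ)
    (by rw [Real.sqrt_lt' one_pos]; linarith)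
  have hM0 : 0 ≤ M := le_trans (by positivity) (hM 0)
  have hcη : c ^ η < 1 := Real.rpow_lt_one h0.le h1 hη
  have hτs : √τ < 1 := by rw [Real.sqrt_lt' one_pos]; linarith
  refine ⟨C * (L + K) ^ η + M * (C₁ + C₃), max (c ^ η) (√τ), by positivity,
    lt_max_of_lt_right (by positivity), max_lt hcη hτs, fun n => (main n).trans ?_⟩
  have e1 : ((L + K) * c ^ n) ^ η = (L + K) ^ η * (c ^ η) ^ n := by
    rw [Real.mul_rpow hLK.le (by positivity), ← Real.rpow_natCast, ← Real.rpow_natCast,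
      ← Real.rpow_mul h0.le, ← Real.rpow_mul h0.le, mul_comm η]
  have e2 : ((n : ℝ) + 1) * τ ^ n ≤ M * (√τ) ^ n := by
    calc ((n : ℝ) + 1) * τ ^ n = ((n : ℝ) + 1) * (√τ) ^ n * (√τ) ^ n := by
          rw [mul_assoc, ← mul_pow, Real.mul_self_sqrt hτ0.le]
      _ ≤ _ := by
          gcongr
          exact hM n
  rw [e1]
  have e3 : (c ^ η) ^ n ≤ max (c ^ η) (√τ) ^ n := by gcongr; exact le_max_left _ _
  have e4 : (√τ) ^ n ≤ max (c ^ η) (√τ) ^ n := by gcongr; exact le_max_right _ _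
  calc _ ≤ C * ((L + K) ^ η * (c ^ η) ^ n) + M * (√τ) ^ n * (C₁ + C₃) := by gcongr
    _ ≤ C * ((L + K) ^ η * max (c ^ η) (√τ) ^ n) + M * max (c ^ η) (√τ) ^ n * (C₁ + C₃) := by
        gcongr
    _ = _ := by ring

end

/-- It suffices to control the balls whose radii form a geometric sequence. -/
theorem smallBalls_of_geometric {W : ℝ → ℝ} {ρ σ A d : ℝ} (hρ0 : 0 < ρ) (hρ1 : ρ < 1) (hσ0 : 0 < σ)
    (hσ1 : σ < 1) (hA : 0 ≤ A) (hd : 0 ≤ d)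
    (h : ∀ n : ℕ, volume {x ∈ Ico (0 : ℝ) 1 | (ρ ^ n) ^ d < volume.real (nearby W x (ρ ^ n))}
      ≤ ENNReal.ofReal (A * σ ^ n)) : SmallBalls W d := by
  have hσ' : 0 < 1 - σ := by linarith
  set η : ℝ := Real.logb ρ σ with hη
  have hη0 : 0 < η := Real.logb_pos_of_base_lt_one hρ0 hρ1 hσ0 hσ1
  have hρη : ρ ^ η = σ := Real.rpow_logb hρ0 hρ1.ne hσ0
  have hρd : 0 < ρ ^ d := by positivity
  set C : ℝ := 1 + (ρ ^ d)⁻¹ + A / ((1 - σ) * σ) with hC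
  have hC1 : 1 ≤ C := by
    have : 0 ≤ (ρ ^ d)⁻¹ + A / ((1 - σ) * σ) := by positivity
    linarith
  have hC2 : (ρ ^ d)⁻¹ ≤ C := by
    have : 0 ≤ A / ((1 - σ) * σ) := by positivity
    linarith
  have hC3 : A / ((1 - σ) * σ) ≤ C := by
    have : 0 ≤ (ρ ^ d)⁻¹ := by positivity
    linarith
  refine ⟨C, hC1, η, hη0, fun R hR => ?_⟩
  rcases le_or_gt 1 R with hR1 | hR1
  · refine (measure_mono (sep_subset _ _)).trans ?_
    rw [Real.volume_Ico]
    refine ENNReal.ofReal_le_ofReal ?_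
    rw [sub_zero]
    exact one_le_mul_of_one_le_of_one_le hC1 (Real.one_le_rpow hR1 hη0.le)
  obtain ⟨m, hm1, hm2⟩ := exists_nat_pow_near_of_lt_one hR hR1.le hρ0 hρ1
  have hsub : {u ∈ Ico (0 : ℝ) 1 | ∃ r, 0 < r ∧ r ≤ R ∧ C * r ^ d < volume.real (nearby W u r)}
      ⊆ ⋃ j : ℕ, {x ∈ Ico (0 : ℝ) 1 |
        (ρ ^ (m + j)) ^ d < volume.real (nearby W x (ρ ^ (m + j)))} := by
    rintro u ⟨hu, r, hr0, hrR, hr⟩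
    obtain ⟨n, hn1, hn2⟩ := exists_nat_pow_near_of_lt_one hr0 (hrR.trans hR1.le) hρ0 hρ1
    have hmn : m ≤ n := by
      have : ρ ^ (n + 1) < ρ ^ m := hn1.trans_le (hrR.trans hm2)
      have := (pow_lt_pow_iff_right_of_lt_one₀ hρ0 hρ1).1 this
      omega
    obtain ⟨j, rfl⟩ := Nat.exists_eq_add_of_le hmn
    refine mem_iUnion.2 ⟨j, hu, ?_⟩
    refine lt_of_le_of_lt ?_ (hr.trans_le (volumeReal_nearby_mono W u hn2))
    calc (ρ ^ (m + j)) ^ d = (ρ ^ d)⁻¹ * (ρ ^ (m + j + 1)) ^ d := by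
          rw [pow_succ, Real.mul_rpow (by positivity) hρ0.le]
          field_simp
      _ ≤ C * r ^ d := by gcongr
  refine (measure_mono hsub).trans ((measure_iUnion_le _).trans ?_)
  refine (ENNReal.tsum_le_tsum fun j => h (m + j)).trans ?_
  have hsumm : Summable fun j : ℕ => A * σ ^ (m + j) := by
    simp_rw [pow_add, ← mul_assoc]
    exact (summable_geometric_of_lt_one hσ0.le hσ1).mul_left _
  rw [← ENNReal.ofReal_tsum_of_nonneg (fun j => by positivity) hsumm]
  refine ENNReal.ofReal_le_ofReal ?_
  have hts : ∑' j : ℕ, A * σ ^ (m + j) = A / ((1 - σ) * σ) * σ ^ (m + 1) := by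
    simp_rw [pow_add, ← mul_assoc]
    rw [tsum_mul_left, tsum_geometric_of_lt_one hσ0.le hσ1]
    field_simp
  rw [hts]
  have hσR : σ ^ (m + 1) ≤ R ^ η := by
    rw [← hρη, ← Real.rpow_natCast, ← Real.rpow_mul hρ0.le, mul_comm, Real.rpow_mul hρ0.le,
      Real.rpow_natCast]
    gcongr
  gcongr

section

variable {b : ℕ} {c : ℝ}

theorem smallBalls_step (hb : 2 ≤ b) (h0 : 0 < c) (h1 : c < 1) (hc : 1 < b * c)
    (hneg : hBBR b (b * c)⁻¹ < 0) {d d' : ℝ} (hd : 1 ≤ d) (hd' : 0 ≤ d')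
    (hdd : c ^ (1 + d) / b < (c / b) ^ d') (hS : SmallBalls (Wc b (b * c)⁻¹) d) :
    SmallBalls (Wc b (b * c)⁻¹) d' := by
  have hb1 : (1 : ℝ) < b := by exact_mod_cast (by omega : 1 < b)
  have hb0 : (0 : ℝ) < b := by linarith
  have hρ0 : 0 < c / b := by positivity
  have hρ1 : c / b < 1 := by rw [div_lt_one hb0]; linarith
  set t : ℝ := c ^ (1 + d) / b / (c / b) ^ d' with ht
  have ht0 : 0 < t := by positivity
  have ht1 : t < 1 := by rw [ht, div_lt_one (by positivity)]; exact hdd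
  obtain ⟨A, σ, hA, hσ0, hσ1, hbad⟩ := exists_volumeReal_heavy_le hb h0 h1 hc hneg hd
    (Real.sqrt_pos.2 ht0) (by rw [Real.sqrt_lt' one_pos]; linarith) hS
  refine smallBalls_of_geometric hρ0 hρ1 hσ0 hσ1 hA hd' fun n => ?_
  have hrpow : ∀ {x : ℝ} (e : ℝ), 0 ≤ x → (x ^ n) ^ e = (x ^ e) ^ n := fun e hx => by
    rw [← Real.rpow_natCast, ← Real.rpow_natCast, ← Real.rpow_mul hx, ← Real.rpow_mul hx, mul_comm]
  have hθ : (c ^ n) ^ (1 + d) / ((b : ℝ) ^ n * (√t ^ n) ^ 2) = ((c / b) ^ n) ^ d' := by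
    rw [← pow_mul, mul_comm n, pow_mul, Real.sq_sqrt ht0.le, hrpow _ h0.le, hrpow _ hρ0.le,
      ← mul_pow, ← div_pow]
    congr 1
    rw [ht]
    field_simp
  have := hbad n
  rw [hθ] at this
  rw [← ENNReal.ofReal_toReal (measure_ne_top_of_subset (sep_subset _ _)
    (by simp : volume (Ico (0 : ℝ) 1) ≠ ⊤))]
  exact ENNReal.ofReal_le_ofReal this

/-- The exponent of the small balls can be taken arbitrarily close to `D`, where
`c = b ^ (1 - D)`. -/
theorem exists_smallBalls (hb : 2 ≤ b) {D : ℝ} (hD1 : 1 < D) (hD2 : D < 2)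
    (hcD : c = (b : ℝ) ^ (1 - D)) (hneg : hBBR b (b * c)⁻¹ < 0) {e : ℝ} (he : e < D) :
    ∃ d, e < d ∧ 1 ≤ d ∧ SmallBalls (Wc b (b * c)⁻¹) d := by
  have hb1 : (1 : ℝ) < b := by exact_mod_cast (by omega : 1 < b)
  have hb0 : (0 : ℝ) < b := by linarith
  have h0 : 0 < c := by rw [hcD]; positivity
  have h1 : c < 1 := by rw [hcD]; exact Real.rpow_lt_one_of_one_lt_of_neg hb1 (by linarith)
  have hc : 1 < b * c := by
    rw [hcD, ← Real.rpow_one_add' hb0.le (by linarith)]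
    exact Real.one_lt_rpow hb1 (by linarith)
  have hρ : c / b = (b : ℝ) ^ (-D) := by
    rw [hcD, ← Real.rpow_sub_one hb0.ne']
    congr 1
    ring
  set q : ℝ := 1 - 1 / (2 * D) with hq
  have hqD : D * q = D - 1 / 2 := by rw [hq]; field_simp
  have hq0 : 0 < q := by
    have : 1 / (2 * D) < 1 := by rw [div_lt_one (by linarith)]; linarith
    linarith
  have hq1 : q < 1 := by
    have : 0 < 1 / (2 * D) := by positivity
    linarith
  have key : ∀ k : ℕ, SmallBalls (Wc b (b * c)⁻¹) (D - (D - 1) * q ^ k) := by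
    intro k
    induction k with
    | zero => simpa using smallBalls_one _
    | succ k ih =>
      have hqk1 : q ^ k ≤ 1 := pow_le_one₀ hq0.le hq1.le
      have hqk1' : q ^ (k + 1) ≤ 1 := pow_le_one₀ hq0.le hq1.le
      have hqk0 : 0 < q ^ k := by positivity
      refine smallBalls_step hb h0 h1 hc hneg (by nlinarith) (by nlinarith) ?_ ih
      rw [hρ, hcD, ← Real.rpow_mul hb0.le, ← Real.rpow_mul hb0.le, ← Real.rpow_sub_one hb0.ne']
      refine Real.rpow_lt_rpow_of_exponent_lt hb1 ?_
      have : D * ((D - 1) * q ^ (k + 1)) = (D - 1) * q ^ k * (D - 1 / 2) := by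
        rw [← hqD]; ring
      have : 0 < (D - 1) * q ^ k := mul_pos (by linarith) hqk0
      nlinarith
  obtain ⟨k, hk⟩ := exists_pow_lt_of_lt_one (sub_pos.2 he) hq1
  have hqk1 : q ^ k ≤ 1 := pow_le_one₀ hq0.le hq1.le
  have hqk0 : 0 < q ^ k := by positivity
  exact ⟨_, by nlinarith, by nlinarith, key k⟩

end

/-! ### The Hausdorff dimension of the graph -/

/-- The mass distribution principle for the graph. -/
theorem le_dimH_of_smallBalls {W : ℝ → ℝ} (hW : Continuous W) {d : ℝ} (hd : 0 < d)
    (hS : SmallBalls W d) :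
    ENNReal.ofReal d ≤ dimH ((fun x => (x, W x)) '' Ico (0 : ℝ) 1) := by
  obtain ⟨C, hC, η, hη, hbad⟩ := hS
  have hC0 : 0 < C := by linarith
  obtain ⟨R, hR0, hR⟩ : ∃ R > (0 : ℝ), C * R ^ η < 1 := by
    refine ⟨(2 * C)⁻¹ ^ η⁻¹, by positivity, ?_⟩
    rw [Real.rpow_inv_rpow (by positivity) hη.ne']
    field_simp
    norm_num
  set f : ℝ → ℝ × ℝ := fun x => (x, W x) with hf
  have hfc : Continuous f := by fun_prop
  set B := toMeasurable volume {u ∈ Ico (0 : ℝ) 1 |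
    ∃ r, 0 < r ∧ r ≤ R ∧ C * r ^ d < volume.real (nearby W u r)} with hB
  have hBm : MeasurableSet B := measurableSet_toMeasurable _ _
  have hBvol : volume B < 1 := by
    rw [hB, measure_toMeasurable]
    refine (hbad R hR0).trans_lt ?_
    rw [← ENNReal.ofReal_one]
    exact (ENNReal.ofReal_lt_ofReal_iff one_pos).2 hR
  set E := Ico (0 : ℝ) 1 \ B with hE
  have hEm : MeasurableSet E := measurableSet_Ico.diff hBm
  have hEvol : volume E ≠ 0 := by
    intro h
    have := le_measure_sdiff (μ := volume) (s₁ := Ico (0 : ℝ) 1) (s₂ := B)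
    rw [← hE, h, Real.volume_Ico, sub_zero, ENNReal.ofReal_one, nonpos_iff_eq_zero,
      tsub_eq_zero_iff_le] at this
    exact absurd this (not_le.2 hBvol)
  set ν : Measure (ℝ × ℝ) := (ENNReal.ofReal C)⁻¹ • (volume.restrict E).map f with hν
  have hle : ν ≤ Measure.hausdorffMeasure d := by
    refine Measure.le_hausdorffMeasure d ν (ENNReal.ofReal R) (by simpa using hR0) fun s hs => ?_
    have hfin : Metric.ediam s ≠ ⊤ := ne_top_of_le_ne_top ENNReal.ofReal_ne_top hs
    set r := (Metric.ediam s).toReal with hr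
    have hrs : Metric.ediam s = ENNReal.ofReal r := (ENNReal.ofReal_toReal hfin).symm
    have hrR : r ≤ R := ENNReal.toReal_le_of_le_ofReal hR0.le hs
    have hcl : Metric.ediam (closure s) = Metric.ediam s := Metric.ediam_closure s
    refine (measure_mono subset_closure).trans ?_
    have hνcl : ν (closure s) = (ENNReal.ofReal C)⁻¹ * volume (f ⁻¹' closure s ∩ E) := by
      rw [hν, Measure.smul_apply, smul_eq_mul, Measure.map_apply hfc.measurable
        isClosed_closure.measurableSet, Measure.restrict_apply
        (hfc.measurable isClosed_closure.measurableSet)]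
    rw [hνcl]
    rcases (f ⁻¹' closure s ∩ E).eq_empty_or_nonempty with he | ⟨x, hxs, hxE⟩
    · simp [he]
    have hsub : f ⁻¹' closure s ∩ E ⊆ nearby W x r := by
      rintro y ⟨hys, -⟩
      have h1 : edist (f y) (f x) ≤ ENNReal.ofReal r := by
        rw [← hrs, ← hcl]
        exact Metric.edist_le_ediam_of_mem hys hxs
      rw [edist_dist, ENNReal.ofReal_le_ofReal_iff ENNReal.toReal_nonneg, Prod.dist_eq,
        max_le_iff] at h1
      exact h1
    have hvol : volume (nearby W x r) ≤ ENNReal.ofReal (C * r ^ d) := by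
      rw [← ENNReal.ofReal_toReal (volume_nearby_ne_top W x r)]
      refine ENNReal.ofReal_le_ofReal ?_
      rcases (ENNReal.toReal_nonneg : 0 ≤ r).eq_or_lt with hr0 | hr0
      · refine (volumeReal_nearby_le W x ENNReal.toReal_nonneg).trans ?_
        rw [hr, ← hr0, Real.zero_rpow hd.ne']
        simp
      · by_contra! hcon
        exact hxE.2 (subset_toMeasurable _ _ ⟨hxE.1, r, hr0, hrR, hcon⟩)
    calc (ENNReal.ofReal C)⁻¹ * volume (f ⁻¹' closure s ∩ E)
        ≤ (ENNReal.ofReal C)⁻¹ * ENNReal.ofReal (C * r ^ d) := by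
          gcongr
          exact (measure_mono hsub).trans hvol
      _ = Metric.ediam s ^ d := by
          rw [ENNReal.ofReal_mul hC0.le, ← mul_assoc,
            ENNReal.inv_mul_cancel (by simpa using hC0) ENNReal.ofReal_ne_top, one_mul, hrs,
            ENNReal.ofReal_rpow_of_nonneg ENNReal.toReal_nonneg hd.le]
  have hν0 : ν (f '' Ico 0 1) ≠ 0 := by
    have h2 : volume E ≤ (volume.restrict E).map f (f '' Ico 0 1) := by
      refine le_trans ?_ (Measure.le_map_apply hfc.aemeasurable _)
      rw [Measure.restrict_apply' hEm]
      exact measure_mono fun x hx => ⟨mem_image_of_mem _ hx.1, hx⟩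
    rw [hν, Measure.smul_apply, smul_eq_mul]
    exact mul_ne_zero (by simp) fun h => hEvol (le_antisymm (h ▸ h2) bot_le)
  have hH : Measure.hausdorffMeasure d (f '' Ico (0 : ℝ) 1) ≠ 0 := fun h =>
    hν0 (le_antisymm (h ▸ hle _) bot_le)
  have := le_dimH_of_hausdorffMeasure_ne_zero (d := d.toNNReal)
    (by rwa [Real.coe_toNNReal d hd.le])
  exact this

theorem abs_Wc_sub_le {b : ℕ} {l : ℝ} (h0 : 0 < l) (h1 : l < 1) (hbl : 1 < b * l) (n : ℕ)
    {x y : ℝ} (hxy : |x - y| ≤ ((b : ℝ) ^ n)⁻¹) :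
    |Wc b l x - Wc b l y| ≤ (2 * π / (b * l - 1) + 2 * (1 - l)⁻¹) * l ^ n := by
  have hb0 : (0 : ℝ) < b := pos_of_mul_pos_left (by linarith) h0.le
  have hbn : (0 : ℝ) < (b : ℝ) ^ n := by positivity
  have hbl' : 0 < b * l - 1 := by linarith
  rw [Wc_eq_sum_add b h0 h1 n x, Wc_eq_sum_add b h0 h1 n y]
  have hfin : |∑ k ∈ Finset.range n, (l ^ k * Real.cos (2 * π * (b : ℝ) ^ k * x)
      - l ^ k * Real.cos (2 * π * (b : ℝ) ^ k * y))| ≤ 2 * π / (b * l - 1) * l ^ n := by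
    calc _ ≤ ∑ k ∈ Finset.range n, 2 * π * ((b : ℝ) ^ n)⁻¹ * (b * l) ^ k := by
          refine (Finset.abs_sum_le_sum_abs _ _).trans (Finset.sum_le_sum fun k _ => ?_)
          rw [← mul_sub, abs_mul, abs_of_pos (by positivity : 0 < l ^ k)]
          calc l ^ k * _ ≤ l ^ k * |2 * π * (b : ℝ) ^ k * x - 2 * π * (b : ℝ) ^ k * y| :=
                mul_le_mul_of_nonneg_left (Real.abs_cos_sub_cos_le _ _) (by positivity)
            _ = l ^ k * (2 * π * (b : ℝ) ^ k * |x - y|) := by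
                rw [← mul_sub, abs_mul, abs_of_pos (by positivity : 0 < 2 * π * (b : ℝ) ^ k)]
            _ ≤ l ^ k * (2 * π * (b : ℝ) ^ k * ((b : ℝ) ^ n)⁻¹) := by gcongr
            _ = _ := by rw [mul_pow]; ring
      _ = 2 * π * ((b : ℝ) ^ n)⁻¹ * (((b * l) ^ n - 1) / (b * l - 1)) := by
          rw [← Finset.mul_sum, geom_sum_eq hbl.ne']
      _ ≤ 2 * π * ((b : ℝ) ^ n)⁻¹ * ((b * l) ^ n / (b * l - 1)) := by
          gcongr
          linarith
      _ = _ := by rw [mul_pow]; field_simp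
  have htail : |l ^ n * Wc b l ((b : ℝ) ^ n * x) - l ^ n * Wc b l ((b : ℝ) ^ n * y)|
      ≤ 2 * (1 - l)⁻¹ * l ^ n := by
    rw [← mul_sub, abs_mul, abs_of_pos (by positivity : 0 < l ^ n), mul_comm]
    gcongr
    refine (abs_sub _ _).trans ?_
    linarith [abs_Wc_le b h0 h1 ((b : ℝ) ^ n * x), abs_Wc_le b h0 h1 ((b : ℝ) ^ n * y)]
  rw [Finset.sum_sub_distrib] at hfin
  rw [add_sub_add_comm, add_mul]
  exact (abs_add_le _ _).trans (add_le_add hfin htail)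

theorem ediam_Icc_prod_Icc_le (x y r : ℝ) :
    Metric.ediam (Icc x (x + r) ×ˢ Icc y (y + r)) ≤ ENNReal.ofReal r := by
  refine Metric.ediam_le fun p hp q hq => ?_
  rw [edist_dist]
  refine ENNReal.ofReal_le_ofReal ?_
  rw [Prod.dist_eq]
  have h1 := Real.dist_le_of_mem_Icc hp.1 hq.1
  have h2 := Real.dist_le_of_mem_Icc hp.2 hq.2
  exact max_le (by linarith) (by linarith)

theorem dimH_graph_Wc_le {b : ℕ} {l D : ℝ} (h0 : 0 < l) (h1 : l < 1) (hbl : 1 < b * l)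
    (hD0 : 0 ≤ D) (hD : (b : ℝ) ^ D = (b : ℝ) ^ 2 * l) :
    dimH ((fun x => (x, Wc b l x)) '' Ico (0 : ℝ) 1) ≤ ENNReal.ofReal D := by
  have hb0 : (0 : ℝ) < b := pos_of_mul_pos_left (by linarith) h0.le
  have hb1 : (1 : ℝ) < b := by nlinarith
  have hl1 : 0 < 1 - l := by linarith
  have hbl' : 0 < b * l - 1 := by linarith
  set K : ℝ := 2 * π / (b * l - 1) + 2 * (1 - l)⁻¹ with hK
  have hK0 : 0 ≤ K := by positivity
  set m : ℕ → ℕ := fun n => ⌊2 * K * (b * l) ^ n⌋₊ + 1 with hm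
  set t : ∀ n : ℕ, Fin (b ^ n) × Fin (m n) → Set (ℝ × ℝ) := fun n i =>
    Icc ((i.1 : ℝ) / b ^ n) ((i.1 : ℝ) / b ^ n + ((b : ℝ) ^ n)⁻¹) ×ˢ
    Icc (Wc b l ((i.1 : ℝ) / b ^ n) - K * l ^ n + (i.2 : ℝ) * ((b : ℝ) ^ n)⁻¹)
      (Wc b l ((i.1 : ℝ) / b ^ n) - K * l ^ n + (i.2 : ℝ) * ((b : ℝ) ^ n)⁻¹ + ((b : ℝ) ^ n)⁻¹)
    with ht
  have hdiam : ∀ n i, Metric.ediam (t n i) ≤ ENNReal.ofReal ((b : ℝ) ^ n)⁻¹ := fun n i =>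
    ediam_Icc_prod_Icc_le _ _ _
  have hcover : ∀ n, (fun x => (x, Wc b l x)) '' Ico (0 : ℝ) 1 ⊆ ⋃ i, t n i := by
    rintro n _ ⟨x, ⟨hx0, hx1⟩, rfl⟩
    have hbn : (0 : ℝ) < (b : ℝ) ^ n := by positivity
    have hp1 := Nat.floor_le (by positivity : 0 ≤ x * (b : ℝ) ^ n)
    have hp2 := Nat.lt_floor_add_one (x * (b : ℝ) ^ n)
    set p := ⌊x * (b : ℝ) ^ n⌋₊ with hp
    have hpb : p < b ^ n := by
      rw [hp, Nat.floor_lt (by positivity)]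
      push_cast
      nlinarith
    have hx2 : (p : ℝ) / b ^ n ≤ x := by rwa [div_le_iff₀ hbn]
    have hx3 : x ≤ (p : ℝ) / b ^ n + ((b : ℝ) ^ n)⁻¹ := by
      rw [← one_div, ← add_div, le_div_iff₀ hbn]
      exact hp2.le
    have hosc := abs_le.1 (abs_Wc_sub_le h0 h1 hbl n (x := x) (y := (p : ℝ) / b ^ n)
      (by rw [abs_of_nonneg (by linarith)]; linarith))
    rw [← hK] at hosc
    set y := (Wc b l x - Wc b l ((p : ℝ) / b ^ n) + K * l ^ n) * (b : ℝ) ^ n with hy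
    have hy0 : 0 ≤ y := mul_nonneg (by linarith) hbn.le
    have hyle : y ≤ 2 * K * (b * l) ^ n := by
      rw [hy, mul_pow]
      calc _ ≤ (K * l ^ n + K * l ^ n) * (b : ℝ) ^ n := by gcongr; linarith
        _ = _ := by ring
    have hj1 := Nat.floor_le hy0
    have hj2 := Nat.lt_floor_add_one y
    have hjm : ⌊y⌋₊ < m n := Nat.lt_succ_of_le (Nat.floor_le_floor hyle)
    refine mem_iUnion.2 ⟨(⟨p, hpb⟩, ⟨⌊y⌋₊, hjm⟩), ⟨hx2, hx3⟩, ?_, ?_⟩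
    · have : (⌊y⌋₊ : ℝ) * ((b : ℝ) ^ n)⁻¹ ≤ y * ((b : ℝ) ^ n)⁻¹ := by gcongr
      rw [hy, mul_inv_cancel_right₀ hbn.ne'] at this
      dsimp only
      linarith
    · have : y * ((b : ℝ) ^ n)⁻¹ ≤ ((⌊y⌋₊ : ℝ) + 1) * ((b : ℝ) ^ n)⁻¹ := by gcongr
      rw [hy, mul_inv_cancel_right₀ hbn.ne'] at this
      dsimp only
      linarith
  have hr : Tendsto (fun n : ℕ => ENNReal.ofReal ((b : ℝ) ^ n)⁻¹) atTop (nhds 0) := by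
    rw [← ENNReal.ofReal_zero]
    exact ENNReal.tendsto_ofReal (tendsto_inv_atTop_zero.comp
      (tendsto_pow_atTop_atTop_of_one_lt hb1))
  have hsum : ∀ n, ∑ i, Metric.ediam (t n i) ^ D ≤ ENNReal.ofReal (2 * K + 1) := by
    intro n
    have hbn : (0 : ℝ) < (b : ℝ) ^ n := by positivity
    have hpow : (((b : ℝ) ^ n)⁻¹) ^ D = (((b : ℝ) ^ 2 * l) ^ n)⁻¹ := by
      rw [Real.inv_rpow hbn.le, ← hD, ← Real.rpow_natCast, ← Real.rpow_natCast,
        ← Real.rpow_mul hb0.le, ← Real.rpow_mul hb0.le, mul_comm]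
    have hmle : (m n : ℝ) ≤ (2 * K + 1) * (b * l) ^ n := by
      have h2 : (⌊2 * K * (b * l) ^ n⌋₊ : ℝ) ≤ 2 * K * (b * l) ^ n := Nat.floor_le (by positivity)
      have h3 : 1 ≤ (b * l) ^ n := one_le_pow₀ hbl.le
      rw [hm]
      push_cast
      linarith
    calc ∑ i, Metric.ediam (t n i) ^ D
        ≤ ∑ _i : Fin (b ^ n) × Fin (m n), ENNReal.ofReal ((((b : ℝ) ^ n)⁻¹) ^ D) := by
          refine Finset.sum_le_sum fun i _ => ?_
          rw [← ENNReal.ofReal_rpow_of_nonneg (by positivity) hD0]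
          exact ENNReal.rpow_le_rpow (hdiam n i) hD0
      _ = ENNReal.ofReal ((b : ℝ) ^ n * m n * (((b : ℝ) ^ 2 * l) ^ n)⁻¹) := by
          rw [Finset.sum_const, nsmul_eq_mul, hpow, ENNReal.ofReal_mul (by positivity),
            Finset.card_univ, Fintype.card_prod, Fintype.card_fin, Fintype.card_fin,
            ← ENNReal.ofReal_natCast]
          push_cast
          rfl
      _ ≤ ENNReal.ofReal (2 * K + 1) := by
          refine ENNReal.ofReal_le_ofReal ?_
          rw [← div_eq_mul_inv, div_le_iff₀ (by positivity)]
          calc (b : ℝ) ^ n * m n ≤ (b : ℝ) ^ n * ((2 * K + 1) * (b * l) ^ n) := by gcongr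
            _ = _ := by rw [mul_pow, mul_pow]; ring
  have hH := Measure.hausdorffMeasure_le_liminf_sum D
    ((fun x => (x, Wc b l x)) '' Ico (0 : ℝ) 1) _ hr t (Eventually.of_forall hdiam)
    (Eventually.of_forall hcover)
  have hHle := hH.trans ((liminf_le_liminf (Eventually.of_forall hsum)).trans
    (liminf_const _).le)
  refine dimH_le_of_hausdorffMeasure_ne_top (d := D.toNNReal) ?_
  rw [Real.coe_toNNReal D hD0]
  exact ne_top_of_le_ne_top ENNReal.ofReal_ne_top hHle

/-- If `b ≥ 2` is an integer, `λ ∈ (1/b, 1)` and `h_b(μ) < 0` for all `μ ∈ [λ, 1)`, then the graph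
of the classical Weierstrass function `W_{λ,b}` has Hausdorff dimension `2 + log λ / log b`. -/
theorem stmt2 (b : ℕ) (hb : 2 ≤ b) (l : ℝ) (hl : l ∈ Set.Ioo (1 / (b : ℝ)) 1)
    (hneg : ∀ μ : ℝ, l ≤ μ → μ < 1 → hBBR b μ < 0) :
    dimH ((fun x => (x, Wc b l x)) '' Set.Ico (0 : ℝ) 1)
      = ENNReal.ofReal (2 + Real.log l / Real.log b) := by
  obtain ⟨hl0, hl1⟩ := hl
  have hb1 : (1 : ℝ) < b := by exact_mod_cast (by omega : 1 < b)
  have hb0 : (0 : ℝ) < b := by linarith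
  have h0 : 0 < l := lt_trans (by positivity) hl0
  have hbl : 1 < b * l := by rwa [div_lt_iff₀' hb0] at hl0
  have hlog : 0 < Real.log b := Real.log_pos hb1
  set D := 2 + Real.log l / Real.log b with hDdef
  have hbD : (b : ℝ) ^ (D - 2) = l := by
    rw [hDdef, add_sub_cancel_left, Real.log_div_log, Real.rpow_logb hb0 hb1.ne' h0]
  have hD : (b : ℝ) ^ D = (b : ℝ) ^ 2 * l := by
    rw [← hbD, ← Real.rpow_natCast, ← Real.rpow_add hb0]
    norm_num
  have hD2 : D < 2 := by
    have : Real.log l / Real.log b < 0 := div_neg_of_neg_of_pos (Real.log_neg h0 hl1) hlog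
    linarith
  have hD1 : 1 < D := by
    have h3 : 0 < Real.log b + Real.log l := by
      rw [← Real.log_mul hb0.ne' h0.ne']
      exact Real.log_pos hbl
    have : -1 < Real.log l / Real.log b := by
      rw [lt_div_iff₀ hlog]
      linarith
    linarith
  set c : ℝ := (b : ℝ) ^ (1 - D) with hc
  have hcl : (b * c)⁻¹ = l := by
    rw [hc, ← Real.rpow_one_add' hb0.le (by linarith), ← Real.rpow_neg hb0.le, ← hbD]
    congr 1
    ring
  refine le_antisymm (dimH_graph_Wc_le h0 hl1 hbl (by linarith) hD) (le_of_forall_lt fun e he => ?_)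
  have he' : e.toReal < D := by
    rwa [ENNReal.lt_ofReal_iff_toReal_lt (ne_top_of_lt he)] at he
  obtain ⟨d, hed, hd1, hS⟩ := exists_smallBalls hb hD1 hD2 hc
    (by rw [hcl]; exact hneg l le_rfl hl1) he'
  rw [hcl] at hS
  refine lt_of_lt_of_le ?_ (le_dimH_of_smallBalls (continuous_Wc b h0 hl1) (by linarith) hS)
  rwa [ENNReal.lt_ofReal_iff_toReal_lt (ne_top_of_lt he)]
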